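/- arXiv:1103.3282 — 2 statements merged into one kernel-verified Lean document; each statement's English description precedes it below -/
import Mathlib

section
/- Let φ be a local symplectomorphism of (ℝ⁴,0) (φ(0)=0 and φ*ω₀=ω₀ near 0) that preserves the focus-focus foliation near the origin, i.e. the map q∘φ is constant on each connected component of each level set of q=(q₁,q₂) near 0. Then there exists a unique germ of diffeomorphism G:(ℝ²,0)→(ℝ²,0) such that q∘φ = G∘q near the origin; moreover G=(G₁,G₂) where G₂(c₁,c₂)=ε₂c₂ and (c₁,c₂)↦G₁(c₁,c₂)−ε₁c₁ is flat at the origin, for some signs ε₁,ε₂∈{+1,−1}. -/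
open Filter Topology Set MeasureTheory

noncomputable section

/-- ℝ⁴ with coordinates `(x₁, ξ₁, x₂, ξ₂) = (p 0, p 1, p 2, p 3)`. -/
abbrev E4 : Type := Fin 4 → ℝ

/-- ℝ². -/
abbrev E2 : Type := Fin 2 → ℝ

/-- The focus-focus quadratic form `q₁ = x₁ξ₁ + x₂ξ₂`. -/
def q1 (p : E4) : ℝ := p 0 * p 1 + p 2 * p 3

/-- The focus-focus quadratic form `q₂ = x₁ξ₂ − x₂ξ₁`. -/
def q2 (p : E4) : ℝ := p 0 * p 3 - p 2 * p 1

/-- The map `q = (q₁, q₂) : ℝ⁴ → ℝ²`. -/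
def qmap (p : E4) : E2 := ![q1 p, q2 p]

/-- The canonical symplectic form `ω₀ = dξ₁∧dx₁ + dξ₂∧dx₂` as a bilinear form on ℝ⁴. -/
def omega0 (u v : E4) : ℝ := u 1 * v 0 - u 0 * v 1 + u 3 * v 2 - u 2 * v 3

/-- A map is flat at a point if all its iterated derivatives (including the value) vanish. -/
def flatAt {E F : Type*} [NormedAddCommGroup E] [NormedSpace ℝ E]
    [NormedAddCommGroup F] [NormedSpace ℝ F] (f : E → F) (x : E) : Prop :=
  ∀ n : ℕ, iteratedFDeriv ℝ n f x = 0

/-!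
In the complex coordinates `a = x₁ - i x₂`, `w = ξ₁ + i ξ₂` one has `q₁ + i q₂ = a w` and
`ω₀ = Re (dw ∧ da)`. Leafwise constancy makes `q ∘ φ` a function `G` of `q`, smooth because
`c ↦ (δ, c / δ)` is a section of `q`. The linear part of `φ` is symplectic and conjugates the
linear Hamiltonian flows of `q₁` and `q₂`, whose generators are told apart by their squares `1` and
`-1`; so the linear part of `G` is `(ε₁ c₁, ε₂ c₂)`, and after composing with its inverse one may
assume that `φ` is tangent to the identity.

With `λ = Re (w da)`, the form `φ^*λ - λ` has a primitive `F`. On the leaf `a w = c`, where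
`λ = Re (c da / a)` and `φ^*λ = Re (G c d(φ₁) / φ₁)`, this says that
`F - Re (G c log (φ₁ / a)) - Re ((G c - c) log a)` is locally constant. Going once around the leaf
changes `log a` by `2πi`, hence `Im (G c) = Im c`. Comparing the two ends `(δ, c / δ)` and
`(c / δ, δ)` of the leaf gives `(Re (G c) - Re c) log |c| = smooth + O(Re (G c) - Re c)`. If the
Taylor expansion of `Re (G c) - Re c` started in some finite degree, the left-hand side would
contain an uncancelled logarithmic term; so `Re (G c) - Re c` is flat.
-/

open Asymptotics
open scoped ContDiff

section Taylor

variable {E F : Type*} [NormedAddCommGroup E] [NormedAddCommGroup F]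

theorem isLittleO_norm_sub_pow_pow (x : E) {m k : ℕ} (h : k < m) :
    (fun y ↦ ‖y - x‖ ^ m) =o[𝓝 x] fun y ↦ ‖y - x‖ ^ k :=
  (isLittleO_pow_pow (𝕜 := ℝ) h).comp_tendsto (tendsto_norm_sub_self x)

variable [NormedSpace ℝ E] [NormedSpace ℝ F] {f : E → F} {x : E}

theorem multilinear_diagonal_eq_zero_of_isLittleO {n : ℕ} {p : E [×n]→L[ℝ] F}
    (hp : (fun y ↦ p fun _ ↦ y) =o[𝓝 0] fun y ↦ ‖y‖ ^ n) (y : E) : (p fun _ ↦ y) = 0 := by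
  have hray : Tendsto (fun t : ℝ ↦ t • y) (𝓝[≠] 0) (𝓝 0) :=
    ((continuous_id.smul continuous_const).tendsto' 0 0 (zero_smul ℝ y)).mono_left
      nhdsWithin_le_nhds
  have hmul : (fun t : ℝ ↦ t ^ n • p fun _ ↦ y) =o[𝓝[≠] 0] fun t ↦ t ^ n := by
    have hbound : (fun t : ℝ ↦ ‖t • y‖ ^ n) =O[𝓝[≠] 0] fun t ↦ t ^ n :=
      .of_bound (‖y‖ ^ n) (.of_forall fun t ↦ by simp [norm_smul, mul_pow, mul_comm])
    refine ((hp.comp_tendsto hray).trans_isBigO hbound).congr_left fun t ↦ ?_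
    simpa using p.map_smul_univ (fun _ ↦ t) fun _ ↦ y
  have hconst : (fun _ : ℝ ↦ p fun _ ↦ y) =o[𝓝[≠] 0] fun _ ↦ (1 : ℝ) := by
    refine ((isBigO_refl (fun t : ℝ ↦ (t ^ n)⁻¹) (𝓝[≠] 0)).smul_isLittleO hmul).congr' ?_ ?_ <;>
    · filter_upwards [self_mem_nhdsWithin] with t ht
      simp [pow_ne_zero n ht]
  exact tendsto_nhds_unique tendsto_const_nhds ((isLittleO_one_iff ℝ).1 hconst)

theorem taylor_isBigO [CompleteSpace F] {n : ℕ} (hf : ContDiffAt ℝ (n + 1) f x) :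
    (fun y ↦ f y - ∑ k ∈ Finset.range (n + 1),
      (k.factorial : ℝ)⁻¹ • iteratedFDeriv ℝ k f x fun _ ↦ y - x)
      =O[𝓝 x] fun y ↦ ‖y - x‖ ^ (n + 1) := by
  set M := ‖iteratedFDeriv ℝ (n + 1) f x‖ + 1
  have hsmooth : ∀ᶠ y in 𝓝 x, ContDiffAt ℝ (n + 1) f y := hf.eventually (by simp)
  have hbounded : ∀ᶠ y in 𝓝 x, ‖iteratedFDeriv ℝ (n + 1) f y‖ < M := by
    have hcont : ContinuousAt (iteratedFDeriv ℝ (n + 1) f) x :=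
      (hf.iteratedFDeriv_right (m := 0) (by simp)).continuousAt
    exact hcont.norm.eventually_lt continuousAt_const (lt_add_one _)
  obtain ⟨r, hr, hball⟩ := Metric.eventually_nhds_iff_ball.1 (hsmooth.and hbounded)
  refine .of_bound (‖(n.factorial : ℝ)⁻¹‖ * M) ?_
  filter_upwards [Metric.ball_mem_nhds x hr] with y hy
  have hsegment : ∀ t ∈ Icc (0 : ℝ) 1, x + t • (y - x) ∈ Metric.ball x r := fun t ht ↦
    (convex_ball x r).add_smul_sub_mem (Metric.mem_ball_self hr) hy ht
  have htaylor := map_add_eq_sum_add_integral_iteratedFDeriv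
    fun t ht ↦ (hball _ (hsegment t ht)).1
  rw [add_sub_cancel] at htaylor
  rw [htaylor, add_sub_cancel_left, norm_smul, mul_assoc]
  gcongr
  refine (intervalIntegral.norm_integral_le_of_norm_le_const (C := M * ‖y - x‖ ^ (n + 1))
    fun t ht ↦ ?_).trans_eq (by simp)
  rw [uIoc_of_le zero_le_one] at ht
  have hpow : ‖(1 - t) ^ n‖ ≤ 1 := by
    rw [norm_pow, Real.norm_of_nonneg (sub_nonneg.2 ht.2)]
    exact pow_le_one₀ (sub_nonneg.2 ht.2) (sub_le_self _ ht.1.le)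
  have hderiv := (hball _ (hsegment t ⟨ht.1.le, ht.2⟩)).2.le
  calc ‖(1 - t) ^ n • iteratedFDeriv ℝ (n + 1) f (x + t • (y - x)) fun _ ↦ y - x‖
      ≤ 1 * (M * ‖y - x‖ ^ (n + 1)) := by
        rw [norm_smul]
        gcongr
        simpa using ContinuousMultilinearMap.le_of_opNorm_le hderiv fun _ ↦ y - x
    _ = M * ‖y - x‖ ^ (n + 1) := one_mul _

theorem iteratedFDeriv_diagonal_eq_zero_of_isLittleO [CompleteSpace F]
    (hf : ContDiffAt ℝ ∞ f x) {m : ℕ} (h : f =o[𝓝 x] fun y ↦ ‖y - x‖ ^ m) :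
    ∀ k ≤ m, ∀ y, (iteratedFDeriv ℝ k f x fun _ ↦ y) = 0 := by
  intro k
  induction k using Nat.strong_induction_on with
  | _ k ih =>
  intro hk y
  have htaylor := (taylor_isBigO (n := k) (hf.of_le (mod_cast le_top))).trans_isLittleO
    (isLittleO_norm_sub_pow_pow x k.lt_succ_self)
  have hf_small : f =o[𝓝 x] fun y ↦ ‖y - x‖ ^ k := by
    rcases hk.eq_or_lt with rfl | hlt
    · exact h
    · exact h.trans (isLittleO_norm_sub_pow_pow x hlt)
  have hterm : (fun y ↦ (k.factorial : ℝ)⁻¹ • iteratedFDeriv ℝ k f x fun _ ↦ y - x)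
      =o[𝓝 x] fun y ↦ ‖y - x‖ ^ k := by
    refine (hf_small.sub htaylor).congr_left fun y ↦ ?_
    rw [sub_sub_cancel, Finset.sum_range_succ, Finset.sum_eq_zero fun j hj ↦ ?_, zero_add]
    have hj : j < k := Finset.mem_range.1 hj
    rw [ih j hj (hj.le.trans hk), smul_zero]
  refine multilinear_diagonal_eq_zero_of_isLittleO ?_ y
  have hshift : Tendsto (fun v : E ↦ x + v) (𝓝 0) (𝓝 x) :=
    (continuous_const_add x).tendsto' 0 x (add_zero x)
  rw [isLittleO_const_smul_left (by positivity)] at hterm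
  simpa [Function.comp_def] using hterm.comp_tendsto hshift

theorem isBigO_norm_sub_pow_succ_of_isLittleO [CompleteSpace F] (hf : ContDiffAt ℝ ∞ f x)
    {m : ℕ} (h : f =o[𝓝 x] fun y ↦ ‖y - x‖ ^ m) : f =O[𝓝 x] fun y ↦ ‖y - x‖ ^ (m + 1) := by
  refine (taylor_isBigO (n := m) (hf.of_le (mod_cast le_top))).congr_left fun y ↦ ?_
  rw [Finset.sum_eq_zero fun j hj ↦ ?_, sub_zero]
  rw [iteratedFDeriv_diagonal_eq_zero_of_isLittleO hf h j
    (Nat.lt_succ_iff.1 (Finset.mem_range.1 hj)), smul_zero]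

end Taylor

section Flat

variable {E F : Type*} [NormedAddCommGroup E] [NormedSpace ℝ E]
  [NormedAddCommGroup F] [NormedSpace ℝ F] {f : E → F} {x : E}

theorem norm_fderiv_le_of_lipschitzOnWith_fderiv {M η : ℝ} {K : NNReal} (hη : 0 < η)
    (hdiff : ∀ y ∈ Metric.closedBall x η, DifferentiableAt ℝ f y)
    (hlip : LipschitzOnWith K (fderiv ℝ f) (Metric.closedBall x η))
    (hM : ∀ y ∈ Metric.closedBall x η, ‖f y‖ ≤ M) :
    ‖fderiv ℝ f x‖ ≤ 2 * M / η + K * η := by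
  have hx : x ∈ Metric.closedBall x η := Metric.mem_closedBall_self hη.le
  have hM0 : 0 ≤ M := (norm_nonneg _).trans (hM x hx)
  refine ContinuousLinearMap.opNorm_le_of_unit_norm (by positivity) fun u hu ↦ ?_
  have hnorm : ‖η • u‖ = η := by rw [norm_smul, hu, mul_one, Real.norm_of_nonneg hη.le]
  have hy : x + η • u ∈ Metric.closedBall x η := by
    rw [mem_closedBall_iff_norm, add_sub_cancel_left, hnorm]
  have hmean := (convex_closedBall x η).norm_image_sub_le_of_norm_fderiv_le' (φ := fderiv ℝ f x)
    (C := K * η) hdiff (fun z hz ↦ (hlip.norm_sub_le hz hx).trans ?_) hx hy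
  · rw [add_sub_cancel_left, map_smul, hnorm] at hmean
    have htriangle : η * ‖fderiv ℝ f x u‖ ≤ 2 * M + K * η * η := by
      calc η * ‖fderiv ℝ f x u‖ = ‖η • fderiv ℝ f x u‖ := by
            rw [norm_smul, Real.norm_of_nonneg hη.le]
        _ = ‖(f (x + η • u) - f x) - (f (x + η • u) - f x - η • fderiv ℝ f x u)‖ := by
            rw [sub_sub_cancel]
        _ ≤ ‖f (x + η • u)‖ + ‖f x‖ + K * η * η :=
            (norm_sub_le _ _).trans (add_le_add (norm_sub_le _ _) hmean)
        _ ≤ 2 * M + K * η * η := by linarith [hM x hx, hM _ hy]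
    calc ‖fderiv ℝ f x u‖ ≤ (2 * M + K * η * η) / η := by rwa [le_div_iff₀' hη]
      _ = 2 * M / η + K * η := by field_simp
  · gcongr
    exact mem_closedBall_iff_norm.1 hz

theorem isBigO_fderiv_of_isBigO_norm_sub_pow (hf : ContDiffAt ℝ 2 f x) {m : ℕ} (hm : m ≠ 0)
    (h : f =O[𝓝 x] fun y ↦ ‖y - x‖ ^ (2 * m)) :
    fderiv ℝ f =O[𝓝 x] fun y ↦ ‖y - x‖ ^ m := by
  obtain ⟨K, s, hs, hlip⟩ := (hf.fderiv_right (m := 1) le_rfl).exists_lipschitzOnWith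
  have hdiff : ∀ᶠ y in 𝓝 x, DifferentiableAt ℝ f y :=
    (hf.eventually (by simp)).mono fun y hy ↦ hy.differentiableAt (by simp)
  obtain ⟨C, hC, hfC⟩ := h.exists_pos
  obtain ⟨r, hr, hball⟩ := Metric.eventually_nhds_iff_ball.1 ((hdiff.and hfC.bound).and hs)
  refine .of_bound (2 * (C * 2 ^ (2 * m)) + K) ?_
  filter_upwards [Metric.ball_mem_nhds x (show 0 < min (r / 2) 1 by positivity)] with y hy
  rw [mem_ball_iff_norm, lt_min_iff] at hy
  rcases eq_or_ne y x with rfl | hne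
  · have hfderiv : HasFDerivAt f (0 : E →L[ℝ] F) y := by
      refine IsBigO.hasFDerivAt (n := 2 * m) ?_ (by omega)
      exact h
    simp [hfderiv.fderiv, hm]
  -- Trading the value bound against the Lipschitz bound at the scale `‖y - x‖ ^ m`.
  set η := ‖y - x‖ ^ m with hη
  have hpos : 0 < ‖y - x‖ := norm_sub_pos_iff.2 hne
  have hηpos : 0 < η := pow_pos hpos m
  have hηle : η ≤ ‖y - x‖ := pow_le_of_le_one hpos.le hy.2.le hm
  have hnear : ∀ z ∈ Metric.closedBall y η, ‖z - x‖ ≤ 2 * ‖y - x‖ := fun z hz ↦ by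
    linarith [norm_sub_le_norm_sub_add_norm_sub z y x, mem_closedBall_iff_norm.1 hz]
  have hmem : ∀ z ∈ Metric.closedBall y η, z ∈ Metric.ball x r := fun z hz ↦
    mem_ball_iff_norm.2 (by linarith [hnear z hz, hy.1])
  have hvalue : ∀ z ∈ Metric.closedBall y η, ‖f z‖ ≤ C * 2 ^ (2 * m) * η ^ 2 := fun z hz ↦ by
    calc ‖f z‖ ≤ C * ‖z - x‖ ^ (2 * m) := by simpa using (hball z (hmem z hz)).1.2
      _ ≤ C * (2 * ‖y - x‖) ^ (2 * m) := by gcongr; exact hnear z hz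
      _ = C * 2 ^ (2 * m) * η ^ 2 := by rw [hη]; ring
  have hbound := norm_fderiv_le_of_lipschitzOnWith_fderiv hηpos
    (fun z hz ↦ (hball z (hmem z hz)).1.1)
    (hlip.mono fun z hz ↦ (hball z (hmem z hz)).2) hvalue
  rw [Real.norm_of_nonneg hηpos.le]
  calc ‖fderiv ℝ f y‖ ≤ 2 * (C * 2 ^ (2 * m) * η ^ 2) / η + K * η := hbound
    _ = (2 * (C * 2 ^ (2 * m)) + K) * η := by field_simp

theorem isBigO_iteratedFDeriv_of_forall_isBigO (hf : ContDiffAt ℝ ∞ f x)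
    (h : ∀ m : ℕ, f =O[𝓝 x] fun y ↦ ‖y - x‖ ^ m) (n m : ℕ) :
    iteratedFDeriv ℝ n f =O[𝓝 x] fun y ↦ ‖y - x‖ ^ m := by
  induction n generalizing m with
  | zero => exact ((h m).norm_left.congr_left fun y ↦ norm_iteratedFDeriv_zero.symm).of_norm_left
  | succ n ih =>
    have hsmooth : ContDiffAt ℝ 2 (iteratedFDeriv ℝ n f) x :=
      (hf.iteratedFDeriv_right (m := ∞) le_rfl).of_le ENat.LEInfty.out
    have hderiv := isBigO_fderiv_of_isBigO_norm_sub_pow hsmooth m.succ_ne_zero (ih _)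
    exact (hderiv.norm_left.congr_left fun y ↦ norm_fderiv_iteratedFDeriv).of_norm_left.trans
      (isLittleO_norm_sub_pow_pow x m.lt_succ_self).isBigO

theorem flatAt_of_forall_isBigO (hf : ContDiffAt ℝ ∞ f x)
    (h : ∀ m : ℕ, f =O[𝓝 x] fun y ↦ ‖y - x‖ ^ m) : flatAt f x := fun n ↦ by
  simpa using (isBigO_iteratedFDeriv_of_forall_isBigO hf h n 1).eq_zero_of_norm_pow
    (by simp)

end Flat

section LogarithmicBootstrap

variable {E : Type*} [NormedAddCommGroup E]

theorem tendsto_inv_log_norm_zero :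
    Tendsto (fun c : E ↦ (Real.log ‖c‖)⁻¹) (𝓝 0) (𝓝 0) := by
  have hpunctured : Tendsto (fun c : E ↦ (Real.log ‖c‖)⁻¹) (𝓝[≠] 0) (𝓝 0) :=
    (Real.tendsto_log_nhdsGT_zero.comp (tendsto_norm_nhdsNE_zero (E := E))).inv_tendsto_atBot
  have hcont : ContinuousAt (fun c : E ↦ (Real.log ‖c‖)⁻¹) 0 :=
    continuousWithinAt_compl_self.1 (by simpa [ContinuousWithinAt] using hpunctured)
  simpa [ContinuousAt] using hcont

theorem isLittleO_mul_log_norm {g : E → ℝ} {m : ℕ} (hg : g =O[𝓝 0] fun c ↦ ‖c‖ ^ (m + 1)) :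
    (fun c ↦ g c * Real.log ‖c‖) =o[𝓝 0] fun c ↦ ‖c‖ ^ m := by
  have hlog : Tendsto (fun c : E ↦ ‖c‖ * Real.log ‖c‖) (𝓝 0) (𝓝 0) :=
    (Real.continuous_mul_log.comp continuous_norm).tendsto' 0 0 (by simp)
  have hfactor : (fun c ↦ g c * Real.log ‖c‖) =O[𝓝 0]
      fun c : E ↦ ‖c‖ ^ m * (‖c‖ * Real.log ‖c‖) :=
    (hg.mul (isBigO_refl _ _)).congr_right fun c ↦ by ring
  simpa using hfactor.trans_isLittleO
    ((isBigO_refl (fun c : E ↦ ‖c‖ ^ m) (𝓝 0)).mul_isLittleO ((isLittleO_one_iff ℝ).2 hlog))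

theorem isLittleO_of_isBigO_mul_log_norm {g : E → ℝ} {m : ℕ} (hg0 : g 0 = 0)
    (h : (fun c ↦ g c * Real.log ‖c‖) =O[𝓝 0] fun c ↦ ‖c‖ ^ m) :
    g =o[𝓝 0] fun c ↦ ‖c‖ ^ m := by
  refine (h.mul_isLittleO ((isLittleO_one_iff ℝ).2 tendsto_inv_log_norm_zero)).congr' ?_
    (.of_forall fun c ↦ mul_one _)
  filter_upwards [Metric.ball_mem_nhds 0 one_pos] with c hc
  rcases eq_or_ne c 0 with rfl | hne
  · simp [hg0]
  · exact mul_inv_cancel_right₀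
      (Real.log_neg (norm_pos_iff.2 hne) (mem_ball_zero_iff.1 hc)).ne _

variable [NormedSpace ℝ E] {g S R : E → ℝ}

theorem eventuallyEq_mul_log_norm_of_nhdsNE [Nontrivial E] (hg : DifferentiableAt ℝ g 0)
    (hg0 : g 0 = 0) (hS : ContinuousAt S 0) (hR : R =O[𝓝 0] g)
    (h : ∀ᶠ c in 𝓝[≠] 0, g c * Real.log ‖c‖ = S c + R c) :
    (fun c ↦ g c * Real.log ‖c‖) =ᶠ[𝓝 0] fun c ↦ S c + R c := by
  have hlinear : g =O[𝓝 0] fun c ↦ ‖c‖ ^ (0 + 1) := by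
    simpa [hg0] using hg.isBigO_sub.norm_right
  have hR0 : R 0 = 0 := hR.eq_zero_imp.self_of_nhds hg0
  have hRcont : ContinuousAt R 0 := by
    simpa only [ContinuousAt, hR0] using
      hR.trans_tendsto (by simpa only [ContinuousAt, hg0] using hg.continuousAt)
  have hleft : ContinuousAt (fun c ↦ g c * Real.log ‖c‖) 0 := by
    simpa [ContinuousAt, hg0] using isLittleO_mul_log_norm hlinear
  exact (hleft.eventuallyEq_nhds_iff_eventuallyEq_nhdsNE (hS.add hRcont)).1 h

theorem isBigO_norm_pow_of_mul_log_norm_eq [Nontrivial E] (hg : ContDiffAt ℝ ∞ g 0)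
    (hg0 : g 0 = 0) (hS : ContDiffAt ℝ ∞ S 0) (hR : R =O[𝓝 0] g)
    (h : ∀ᶠ c in 𝓝[≠] 0, g c * Real.log ‖c‖ = S c + R c) (n : ℕ) :
    g =O[𝓝 0] fun c ↦ ‖c‖ ^ n := by
  have heq := eventuallyEq_mul_log_norm_of_nhdsNE (hg.differentiableAt (by simp)) hg0
    hS.continuousAt hR h
  have hpow (m : ℕ) : (fun c : E ↦ ‖c‖ ^ (m + 1)) =o[𝓝 0] fun c ↦ ‖c‖ ^ m := by
    simpa using isLittleO_norm_sub_pow_pow (0 : E) m.lt_succ_self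
  have improve {f : E → ℝ} (hf : ContDiffAt ℝ ∞ f 0) {m : ℕ} (hfo : f =o[𝓝 0] fun c ↦ ‖c‖ ^ m) :
      f =O[𝓝 0] fun c ↦ ‖c‖ ^ (m + 1) := by
    simpa using isBigO_norm_sub_pow_succ_of_isLittleO hf (by simpa using hfo)
  suffices hsucc : ∀ m : ℕ, g =O[𝓝 0] fun c ↦ ‖c‖ ^ (m + 1) from
    (hsucc n).trans (hpow n).isBigO
  intro m
  induction m with
  | zero => exact improve hg (by simpa [hg0, ContinuousAt] using hg.continuousAt)
  | succ m ih =>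
    have hS_small : S =o[𝓝 0] fun c ↦ ‖c‖ ^ m :=
      ((isLittleO_mul_log_norm ih).sub ((hR.trans ih).trans_isLittleO (hpow m))).congr'
        (heq.mono fun c hc ↦ by simp [hc]) .rfl
    have hlog : (fun c ↦ g c * Real.log ‖c‖) =O[𝓝 0] fun c ↦ ‖c‖ ^ (m + 1) :=
      ((improve hS hS_small).add (hR.trans ih)).congr' heq.symm .rfl
    exact improve hg (isLittleO_of_isBigO_mul_log_norm hg0 hlog)

end LogarithmicBootstrap

section Leaves

/-- The point with first coordinate `e ^ σ` on the leaf `{(a, w) | a * w = c}` of the focus-focus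
foliation, in the complex coordinates `a = x₁ - i x₂`, `w = ξ₁ + i ξ₂` for which
`q₁ + i q₂ = a * w`. -/
def leafPoint (c σ : ℂ) : ℂ × ℂ := (Complex.exp σ, c * Complex.exp (-σ))

theorem leafPoint_fst_mul_snd (c σ : ℂ) : (leafPoint c σ).1 * (leafPoint c σ).2 = c := by
  simp [leafPoint, mul_left_comm, ← Complex.exp_add]

theorem leafPoint_log {a : ℂ} (ha : a ≠ 0) (w : ℂ) :
    leafPoint (a * w) (Complex.log a) = (a, w) := by
  simp [leafPoint, Complex.exp_neg, Complex.exp_log ha, mul_comm a, ha]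

theorem leafPoint_add_two_pi_mul_I (c σ : ℂ) :
    leafPoint c (σ + 2 * Real.pi * Complex.I) = leafPoint c σ := by
  simp [leafPoint, Complex.exp_add, Complex.exp_neg]

theorem continuous_leafPoint (c : ℂ) : Continuous (leafPoint c) := by
  unfold leafPoint
  fun_prop

theorem convex_leafPoint_preimage_ball (c : ℂ) (r : ℝ) :
    Convex ℝ (leafPoint c ⁻¹' Metric.ball 0 r) := by
  have hfst : ConvexOn ℝ univ fun σ : ℂ ↦ Real.exp σ.re :=
    convexOn_exp.comp_linearMap Complex.reLm
  have hsnd : ConvexOn ℝ univ fun σ : ℂ ↦ ‖c‖ * Real.exp (-σ.re) :=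
    (convexOn_exp.comp_linearMap (-Complex.reLm)).smul (norm_nonneg c)
  have hball : leafPoint c ⁻¹' Metric.ball 0 r =
      {σ | σ ∈ univ ∧ Real.exp σ.re < r} ∩ {σ | σ ∈ univ ∧ ‖c‖ * Real.exp (-σ.re) < r} := by
    ext σ
    simp [leafPoint, Prod.norm_def, Complex.norm_exp]
  exact hball ▸ (hfst.convex_lt r).inter (hsnd.convex_lt r)

theorem tendsto_fst_mul_snd : Tendsto (fun p : ℂ × ℂ ↦ p.1 * p.2) (𝓝 0) (𝓝 0) :=
  (continuous_fst.mul continuous_snd).tendsto' 0 0 (by simp)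

/-- `f` takes a single value on each preconnected subset of `U` lying in one leaf of
`(a, w) ↦ a * w`. -/
def LeafwiseConstantOn {F : Type*} (f : ℂ × ℂ → F) (U : Set (ℂ × ℂ)) : Prop :=
  ∀ S ⊆ U, IsPreconnected S → (∀ x ∈ S, ∀ y ∈ S, x.1 * x.2 = y.1 * y.2) →
    ∀ x ∈ S, ∀ y ∈ S, f x = f y

namespace LeafwiseConstantOn

variable {F : Type*} {f : ℂ × ℂ → F} {r : ℝ}

theorem mono {U V : Set (ℂ × ℂ)} (h : LeafwiseConstantOn f V) (hUV : U ⊆ V) :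
    LeafwiseConstantOn f U :=
  fun S hS ↦ h S (hS.trans hUV)

theorem eq_of_fst_ne_zero (h : LeafwiseConstantOn f (Metric.ball 0 r)) {p p' : ℂ × ℂ}
    (hp : p ∈ Metric.ball 0 r) (hp' : p' ∈ Metric.ball 0 r) (hne : p.1 ≠ 0) (hne' : p'.1 ≠ 0)
    (hleaf : p.1 * p.2 = p'.1 * p'.2) : f p = f p' := by
  have hpre := (convex_leafPoint_preimage_ball (p.1 * p.2) r).isPreconnected.image _
    (continuous_leafPoint (p.1 * p.2)).continuousOn
  refine h _ (image_preimage_subset _ _) hpre ?_ p ⟨Complex.log p.1, ?_⟩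
    p' ⟨Complex.log p'.1, ?_⟩
  · rintro _ ⟨σ, -, rfl⟩ _ ⟨τ, -, rfl⟩
    rw [leafPoint_fst_mul_snd, leafPoint_fst_mul_snd]
  · simpa [leafPoint_log hne] using hp
  · simpa [hleaf, leafPoint_log hne'] using hp'

-- The singular leaf `a * w = 0` is the union of the two coordinate planes, joined at the origin.
theorem eq_of_fst_eq_zero (h : LeafwiseConstantOn f (Metric.ball 0 r)) {p p' : ℂ × ℂ}
    (hp : p ∈ Metric.ball 0 r) (hp' : p' ∈ Metric.ball 0 r) (hfst : p.1 = 0) (hsnd : p'.2 = 0) :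
    f p = f p' := by
  have horigin : (0 : ℂ × ℂ) ∈ Metric.ball 0 r :=
    Metric.mem_ball_self ((norm_nonneg p).trans_lt (mem_ball_zero_iff.1 hp))
  have hplane₁ : Convex ℝ (Metric.ball 0 r ∩ {x : ℂ × ℂ | x.1 = 0}) :=
    (convex_ball 0 r).inter (LinearMap.ker (LinearMap.fst ℝ ℂ ℂ)).convex
  have hplane₂ : Convex ℝ (Metric.ball 0 r ∩ {x : ℂ × ℂ | x.2 = 0}) :=
    (convex_ball 0 r).inter (LinearMap.ker (LinearMap.snd ℝ ℂ ℂ)).convex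
  calc f p = f 0 := h _ inter_subset_left hplane₁.isPreconnected
        (fun x hx y hy ↦ by simp [hx.2.out, hy.2.out]) p ⟨hp, hfst⟩ 0 ⟨horigin, rfl⟩
    _ = f p' := h _ inter_subset_left hplane₂.isPreconnected
        (fun x hx y hy ↦ by simp [hx.2.out, hy.2.out]) 0 ⟨horigin, rfl⟩ p' ⟨hp', hsnd⟩

theorem exists_contDiff_factorization [NormedAddCommGroup F] [NormedSpace ℝ F]
    {U : Set (ℂ × ℂ)} (h : LeafwiseConstantOn f U) (hU : U ∈ 𝓝 0) (hf : ContDiffOn ℝ ∞ f U) :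
    ∃ G : ℂ → F, (∀ᶠ c in 𝓝 0, ContDiffAt ℝ ∞ G c) ∧ ∀ᶠ p in 𝓝 0, f p = G (p.1 * p.2) := by
  obtain ⟨r, hr, hball⟩ := Metric.mem_nhds_iff.1 hU
  obtain ⟨δ, hδ, hδr⟩ := exists_between hr
  have hδne : (δ : ℂ) ≠ 0 := by exact_mod_cast hδ.ne'
  let transversal : ℂ → ℂ × ℂ := fun c ↦ (δ, c / δ)
  have hsmooth : ContDiff ℝ ∞ transversal := by fun_prop
  have hcenter : transversal 0 ∈ Metric.ball 0 r := by simpa [transversal, hr, abs_of_pos hδ]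
  have hmem : ∀ᶠ c in 𝓝 0, transversal c ∈ Metric.ball 0 r :=
    hsmooth.continuous.continuousAt.eventually (Metric.isOpen_ball.mem_nhds hcenter)
  refine ⟨f ∘ transversal, ?_, ?_⟩
  · filter_upwards [hmem] with c hc
    exact ((hf.mono hball).contDiffAt (Metric.isOpen_ball.mem_nhds hc)).comp c hsmooth.contDiffAt
  · filter_upwards [tendsto_fst_mul_snd.eventually hmem, Metric.ball_mem_nhds 0 hr] with p hp' hp
    rcases eq_or_ne p.1 0 with hzero | hne
    · exact (h.mono hball).eq_of_fst_eq_zero hp hp' hzero (by simp [transversal, hzero])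
    · exact (h.mono hball).eq_of_fst_ne_zero hp hp' hne hδne
        (by simp [transversal, hδne, mul_div_cancel₀])

end LeafwiseConstantOn

end Leaves

section LinearSymplectic

/-- The canonical symplectic form `ω₀` in the complex coordinates `a = x₁ - i x₂`,
`w = ξ₁ + i ξ₂`. -/
def symplecticForm (u v : ℂ × ℂ) : ℝ := (u.2 * v.1 - u.1 * v.2).re

theorem eq_of_forall_symplecticForm_eq {x y : ℂ × ℂ}
    (h : ∀ v, symplecticForm v x = symplecticForm v y) : x = y := by
  have h₁ := h (0, 1)
  have h₂ := h (0, Complex.I)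
  have h₃ := h (1, 0)
  have h₄ := h (Complex.I, 0)
  simp only [symplecticForm, zero_mul, one_mul, sub_zero, zero_sub, neg_inj, Complex.neg_re,
    Complex.I_mul_re] at h₁ h₂ h₃ h₄
  exact Prod.ext (Complex.ext h₁ h₂) (Complex.ext h₃ h₄)

/-- The linear Hamiltonian vector field of the quadratic form `(a, w) ↦ Re (k a w)`. -/
def hamiltonianField (k : ℂ) (z : ℂ × ℂ) : ℂ × ℂ := (k * z.1, -(k * z.2))

theorem symplecticForm_hamiltonianField (k : ℂ) (u v : ℂ × ℂ) :
    symplecticForm u (hamiltonianField k v) = (k * (u.1 * v.2 + v.1 * u.2)).re := by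
  rw [symplecticForm, hamiltonianField]
  ring_nf

theorem hamiltonianField_hamiltonianField {k : ℂ} {s : ℝ} (hk : k ^ 2 = s) (z : ℂ × ℂ) :
    hamiltonianField k (hamiltonianField k z) = s • z := by
  ext1 <;> simp only [hamiltonianField, Prod.smul_fst, Prod.smul_snd, Complex.real_smul, ← hk] <;>
    ring

theorem exists_eq_re_mul (ℓ : ℂ →ₗ[ℝ] ℝ) : ∃ k : ℂ, ∀ c, ℓ c = (k * c).re := by
  refine ⟨⟨ℓ 1, -ℓ Complex.I⟩, fun c ↦ ?_⟩
  have hc : c = c.re • 1 + c.im • Complex.I := by simp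
  conv_lhs => rw [hc, map_add, map_smul, map_smul]
  simp [mul_comm]

variable {A : ℂ × ℂ →ₗ[ℝ] ℂ × ℂ} {L : ℂ →ₗ[ℝ] ℂ}

theorem bijective_of_symplecticForm_map
    (hA : ∀ u v, symplecticForm (A u) (A v) = symplecticForm u v) : Function.Bijective A := by
  have hinj : Function.Injective A := fun x y hxy ↦
    eq_of_forall_symplecticForm_eq fun v ↦ by rw [← hA, hxy, hA]
  exact ⟨hinj, LinearMap.injective_iff_surjective.1 hinj⟩

theorem polarization_of_map_mul (hq : ∀ p, (A p).1 * (A p).2 = L (p.1 * p.2)) (u v : ℂ × ℂ) :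
    (A u).1 * (A v).2 + (A v).1 * (A u).2 = L (u.1 * v.2 + v.1 * u.2) := by
  have hsum := hq (u + v)
  have hexpand : (u + v).1 * (u + v).2 = u.1 * u.2 + v.1 * v.2 + (u.1 * v.2 + v.1 * u.2) := by
    rw [Prod.fst_add, Prod.snd_add]
    ring
  rw [hexpand, map_add L, map_add L, ← hq u, ← hq v, map_add A, Prod.fst_add, Prod.snd_add] at hsum
  linear_combination hsum

-- A linear symplectic map pulling `Re (k a w)` back to `Re (k' a w)` intertwines the
-- corresponding Hamiltonian vector fields.
theorem hamiltonianField_map (hA : ∀ u v, symplecticForm (A u) (A v) = symplecticForm u v)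
    (hq : ∀ p, (A p).1 * (A p).2 = L (p.1 * p.2)) {k k' : ℂ}
    (hk : ∀ c, (k * L c).re = (k' * c).re) (v : ℂ × ℂ) :
    hamiltonianField k (A v) = A (hamiltonianField k' v) := by
  refine eq_of_forall_symplecticForm_eq fun u' ↦ ?_
  obtain ⟨u, rfl⟩ := (bijective_of_symplecticForm_map hA).2 u'
  rw [hA, symplecticForm_hamiltonianField, symplecticForm_hamiltonianField,
    polarization_of_map_mul hq, hk]

theorem exists_sq_eq_of_map_mul (hA : ∀ u v, symplecticForm (A u) (A v) = symplecticForm u v)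
    (hq : ∀ p, (A p).1 * (A p).2 = L (p.1 * p.2)) {k : ℂ} {s : ℝ} (hks : k ^ 2 = s) :
    ∃ k' : ℂ, k' ^ 2 = s ∧ ∀ c, (k * L c).re = (k' * c).re := by
  obtain ⟨k', hk'⟩ := exists_eq_re_mul (Complex.reLm ∘ₗ LinearMap.mulLeft ℝ k ∘ₗ L)
  replace hk' : ∀ c, (k * L c).re = (k' * c).re := hk'
  refine ⟨k', ?_, hk'⟩
  have hJ : A (hamiltonianField k' (hamiltonianField k' (1, 0))) = A (s • (1, 0)) := by
    rw [← hamiltonianField_map hA hq hk', ← hamiltonianField_map hA hq hk',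
      hamiltonianField_hamiltonianField hks, map_smul]
  simpa [hamiltonianField, sq] using
    congrArg Prod.fst ((bijective_of_symplecticForm_map hA).1 hJ)

theorem exists_signs_of_map_mul (hA : ∀ u v, symplecticForm (A u) (A v) = symplecticForm u v)
    (hq : ∀ p, (A p).1 * (A p).2 = L (p.1 * p.2)) :
    ∃ ε₁ ε₂ : ℝ, (ε₁ = 1 ∨ ε₁ = -1) ∧ (ε₂ = 1 ∨ ε₂ = -1) ∧
      ∀ c, L c = ⟨ε₁ * c.re, ε₂ * c.im⟩ := by
  obtain ⟨k₁, hk₁, hre⟩ := exists_sq_eq_of_map_mul hA hq (k := 1) (s := 1) (by simp)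
  obtain ⟨k₂, hk₂, him⟩ := exists_sq_eq_of_map_mul hA hq (k := -Complex.I) (s := -1) (by simp)
  have hsign₁ : ∃ ε : ℝ, (ε = 1 ∨ ε = -1) ∧ k₁ = ε := by
    rcases sq_eq_sq_iff_eq_or_eq_neg.1 (show k₁ ^ 2 = 1 ^ 2 by simp [hk₁]) with h | h
    · exact ⟨1, .inl rfl, by simpa using h⟩
    · exact ⟨-1, .inr rfl, by simpa using h⟩
  have hsign₂ : ∃ ε : ℝ, (ε = 1 ∨ ε = -1) ∧ k₂ = -ε * Complex.I := by
    rcases sq_eq_sq_iff_eq_or_eq_neg.1 (show k₂ ^ 2 = Complex.I ^ 2 by simp [hk₂]) with h | h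
    · exact ⟨-1, .inr rfl, by simpa using h⟩
    · exact ⟨1, .inl rfl, by simpa using h⟩
  obtain ⟨ε₁, hε₁, rfl⟩ := hsign₁
  obtain ⟨ε₂, hε₂, rfl⟩ := hsign₂
  exact ⟨ε₁, ε₂, hε₁, hε₂, fun c ↦ Complex.ext (by simpa using hre c) (by simpa using him c)⟩

end LinearSymplectic

section Primitive

/-- `φ` pulls the canonical symplectic form of `ℂ × ℂ` back to itself at every point of `U`. -/
def IsSymplecticOn (φ : ℂ × ℂ → ℂ × ℂ) (U : Set (ℂ × ℂ)) : Prop :=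
  ∀ p ∈ U, ∀ u v, symplecticForm (fderiv ℝ φ p u) (fderiv ℝ φ p v) = symplecticForm u v

/-- The one-form `φ^*λ - λ`, where `λ = Re (w da)` is a primitive of the symplectic form; it is
closed exactly when `φ` is symplectic. -/
def liouvilleDefect (φ : ℂ × ℂ → ℂ × ℂ) (p : ℂ × ℂ) : ℂ × ℂ →L[ℝ] ℝ :=
  Complex.reCLM ∘L
    (ContinuousLinearMap.mul ℝ ℂ (φ p).2 ∘L ContinuousLinearMap.fst ℝ ℂ ℂ ∘L fderiv ℝ φ p -
      ContinuousLinearMap.mul ℝ ℂ p.2 ∘L ContinuousLinearMap.fst ℝ ℂ ℂ)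

variable {φ : ℂ × ℂ → ℂ × ℂ} {p : ℂ × ℂ} {U : Set (ℂ × ℂ)}

theorem contDiffAt_liouvilleDefect {n : WithTop ℕ∞} (hφ : ContDiffAt ℝ (n + 1) φ p) :
    ContDiffAt ℝ n (liouvilleDefect φ) p := by
  have hmul : ∀ {f : ℂ × ℂ → ℂ}, ContDiffAt ℝ n f p →
      ContDiffAt ℝ n (fun x ↦ ContinuousLinearMap.mul ℝ ℂ (f x)) p := fun hf ↦
    (ContinuousLinearMap.mul ℝ ℂ).contDiff.contDiffAt.comp p hf
  exact contDiffAt_const.clm_comp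
    (((hmul (hφ.of_le le_self_add).snd).clm_comp
        (contDiffAt_const.clm_comp (hφ.fderiv_right le_rfl))).sub
      ((hmul contDiffAt_snd).clm_comp contDiffAt_const))

theorem fderiv_liouvilleDefect_apply (hφ : ContDiffAt ℝ 2 φ p) (u v : ℂ × ℂ) :
    fderiv ℝ (liouvilleDefect φ) p u v =
      ((fderiv ℝ φ p u).2 * (fderiv ℝ φ p v).1 +
        (φ p).2 * (fderiv ℝ (fderiv ℝ φ) p u v).1 - u.2 * v.1).re := by
  have hβ : HasFDerivAt (liouvilleDefect φ) (fderiv ℝ (liouvilleDefect φ) p) p :=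
    ((contDiffAt_liouvilleDefect (n := 1) hφ).differentiableAt one_ne_zero).hasFDerivAt
  have hφ' : HasFDerivAt φ (fderiv ℝ φ p) p := (hφ.differentiableAt two_ne_zero).hasFDerivAt
  have hφ'' : HasFDerivAt (fderiv ℝ φ) (fderiv ℝ (fderiv ℝ φ) p) p :=
    ((hφ.fderiv_right (m := 1) le_rfl).differentiableAt one_ne_zero).hasFDerivAt
  have happly := Complex.reCLM.hasFDerivAt.comp p
    ((hφ'.snd.mul (hφ''.clm_apply (hasFDerivAt_const v p)).fst).sub
      ((hasFDerivAt_snd (𝕜 := ℝ) (p := p)).mul (hasFDerivAt_const v.1 p)))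
  have h := DFunLike.congr_fun ((hβ.clm_apply (hasFDerivAt_const v p)).unique happly) u
  simp only [ContinuousLinearMap.comp_zero, zero_add, ContinuousLinearMap.flip_apply,
    ContinuousLinearMap.comp_sub, ContinuousLinearMap.comp_add, sub_apply, add_apply,
    ContinuousLinearMap.comp_apply, smul_apply, ContinuousLinearMap.coe_fst', smul_eq_mul,
    Complex.reCLM_apply, ContinuousLinearMap.coe_snd', zero_apply, mul_zero, Complex.zero_re] at h
  rw [h]
  simp only [Complex.sub_re, Complex.add_re, Complex.mul_re]
  ring

theorem fderiv_liouvilleDefect_symmetric (hφ : ContDiffAt ℝ 2 φ p)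
    (hsymp : ∀ u v, symplecticForm (fderiv ℝ φ p u) (fderiv ℝ φ p v) = symplecticForm u v)
    (u v : ℂ × ℂ) :
    fderiv ℝ (liouvilleDefect φ) p u v = fderiv ℝ (liouvilleDefect φ) p v u := by
  have hsymm : fderiv ℝ (fderiv ℝ φ) p u v = fderiv ℝ (fderiv ℝ φ) p v u :=
    hφ.isSymmSndFDerivAt (by rw [minSmoothness_of_isRCLikeNormedField]) u v
  rw [fderiv_liouvilleDefect_apply hφ, fderiv_liouvilleDefect_apply hφ, hsymm,
    ← sub_eq_zero, ← Complex.sub_re]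
  have h := hsymp u v
  simp only [symplecticForm] at h
  rw [← sub_eq_zero, ← Complex.sub_re] at h
  rw [← h]
  ring_nf

theorem exists_primitive_liouvilleDefect (hU : IsOpen U) (hconv : Convex ℝ U)
    (hφ : ContDiffOn ℝ ∞ φ U) (hsymp : IsSymplecticOn φ U) :
    ∃ F : ℂ × ℂ → ℝ, ContDiffOn ℝ ∞ F U ∧ ∀ p ∈ U, HasFDerivAt F (liouvilleDefect φ p) p := by
  have hφat : ∀ p ∈ U, ContDiffAt ℝ ∞ φ p := fun p hp ↦ hφ.contDiffAt (hU.mem_nhds hp)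
  have hβ : ContDiffOn ℝ ∞ (liouvilleDefect φ) U := fun p hp ↦
    (contDiffAt_liouvilleDefect (hφat p hp)).contDiffWithinAt
  obtain ⟨F, hF⟩ := hconv.exists_forall_hasFDerivAt_of_fderiv_symmetric hU
    (hβ.differentiableOn (by simp)) fun p hp ↦
      fderiv_liouvilleDefect_symmetric ((hφat p hp).of_le ENat.LEInfty.out) (hsymp p hp)
  refine ⟨F, (contDiffOn_infty_iff_fderiv_of_isOpen hU).2 ⟨fun p hp ↦ ?_, ?_⟩, hF⟩
  · exact (hF p hp).differentiableAt.differentiableWithinAt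
  · exact hβ.congr fun p hp ↦ (hF p hp).fderiv

end Primitive

section NearIdentity

theorem norm_div_sub_one_le {x a : ℂ} {k : ℝ} (ha : a ≠ 0) (h : ‖x - a‖ ≤ k * ‖a‖) :
    ‖x / a - 1‖ ≤ k := by
  rwa [div_sub_one ha, norm_div, div_le_iff₀ (norm_pos_iff.2 ha)]

theorem re_pos_of_norm_sub_one_lt_one {z : ℂ} (h : ‖z - 1‖ < 1) : 0 < z.re := by
  have hre := neg_lt_of_abs_lt ((Complex.abs_re_le_norm (z - 1)).trans_lt h)
  rw [Complex.sub_re, Complex.one_re] at hre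
  linarith

theorem log_mul_of_re_pos {x y : ℂ} (hx : 0 < x.re) (hy : 0 < y.re) :
    Complex.log (x * y) = Complex.log x + Complex.log y := by
  have hx0 : x ≠ 0 := by rintro rfl; simp at hx
  have hy0 : y ≠ 0 := by rintro rfl; simp at hy
  have hargx := abs_lt.1 (Complex.abs_arg_lt_pi_div_two_iff.2 (.inl hx))
  have hargy := abs_lt.1 (Complex.abs_arg_lt_pi_div_two_iff.2 (.inl hy))
  exact Complex.log_mul hx0 hy0
    ⟨by linarith [hargx.1, hargy.1], by linarith [hargx.2, hargy.2]⟩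

theorem norm_sub_one_le_of_mul {x y : ℂ} (hxy : ‖x * y - 1‖ ≤ 21 / 100) (hy : ‖y - 1‖ ≤ 1 / 10) :
    ‖x - 1‖ ≤ 31 / 90 := by
  have hnum : ‖(x - 1) * y‖ ≤ 31 / 100 :=
    calc ‖(x - 1) * y‖ = ‖(x * y - 1) - (y - 1)‖ := by ring_nf
      _ ≤ ‖x * y - 1‖ + ‖y - 1‖ := norm_sub_le _ _
      _ ≤ 31 / 100 := by linarith
  have hden : 9 / 10 ≤ ‖y‖ := by
    have := norm_sub_norm_le 1 (1 - y)
    rw [norm_one, norm_sub_rev 1 y, sub_sub_cancel] at this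
    linarith
  rw [norm_mul] at hnum
  nlinarith [norm_nonneg (x - 1)]

theorem norm_mul_sub_one_le {x y : ℂ} (hx : ‖x - 1‖ ≤ 1 / 10) (hy : ‖y - 1‖ ≤ 1 / 10) :
    ‖x * y - 1‖ ≤ 21 / 100 :=
  calc ‖x * y - 1‖ = ‖(x - 1) * (y - 1) + (x - 1) + (y - 1)‖ := by ring_nf
    _ ≤ ‖x - 1‖ * ‖y - 1‖ + ‖x - 1‖ + ‖y - 1‖ := by
      rw [← norm_mul]
      exact norm_add₃_le
    _ ≤ 21 / 100 := by nlinarith [norm_nonneg (x - 1), norm_nonneg (y - 1)]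

theorem norm_mul_log_div_le {z c : ℂ} (h : ‖z - c‖ ≤ 1 / 2 * ‖c‖) :
    ‖z * Complex.log (z / c)‖ ≤ 9 / 4 * ‖z - c‖ := by
  rcases eq_or_ne c 0 with rfl | hc
  · simp
  have hz : ‖z‖ ≤ 3 / 2 * ‖c‖ := by linarith [norm_le_insert' z c]
  have hlog : ‖Complex.log (z / c)‖ ≤ 3 / 2 * (‖z - c‖ / ‖c‖) := by
    have := Complex.norm_log_one_add_half_le_self (norm_div_sub_one_le hc h)
    rwa [add_sub_cancel, div_sub_one hc, norm_div] at this
  calc ‖z * Complex.log (z / c)‖ = ‖z‖ * ‖Complex.log (z / c)‖ := norm_mul _ _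
    _ ≤ 3 / 2 * ‖c‖ * (3 / 2 * (‖z - c‖ / ‖c‖)) := by gcongr
    _ = 9 / 4 * ‖z - c‖ := by
      field_simp [norm_ne_zero_iff.2 hc]
      ring

theorem exists_mul_eq_norm_eq {c : ℂ} {r : ℝ} (hr : 0 < r) (hc : ‖c‖ < r ^ 2) :
    ∃ p ∈ Metric.ball (0 : ℂ × ℂ) r, p.1 * p.2 = c ∧ ‖p.1‖ = ‖p.2‖ := by
  have hfst : ‖(√‖c‖ : ℂ)‖ = √‖c‖ := by simp
  have hsnd : ‖c / √‖c‖‖ = √‖c‖ := by rw [norm_div, hfst, Real.div_sqrt]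
  refine ⟨(√‖c‖, c / √‖c‖), ?_, mul_div_cancel_of_imp' fun h ↦ by simpa using h,
    hfst.trans hsnd.symm⟩
  rw [mem_ball_zero_iff, Prod.norm_def, hfst, hsnd, max_self]
  exact (Real.sqrt_lt' hr).2 hc

/-- On the ball of radius `r`, the map `φ` is smooth, close to the identity, induces `G` on the
leaf space, and `F` is a smooth primitive of the one-form `liouvilleDefect φ`. -/
structure NearIdentityData (φ : ℂ × ℂ → ℂ × ℂ) (G : ℂ → ℂ) (F : ℂ × ℂ → ℝ) (r : ℝ) : Prop where
  pos : 0 < r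
  contDiffOn : ContDiffOn ℝ ∞ φ (Metric.ball 0 r)
  factor : ∀ p ∈ Metric.ball 0 r, (φ p).1 * (φ p).2 = G (p.1 * p.2)
  close : ∀ p ∈ Metric.ball 0 r, ‖φ p - p‖ ≤ 1 / 10 * ‖p‖
  contDiffOn_primitive : ContDiffOn ℝ ∞ F (Metric.ball 0 r)
  hasFDerivAt_primitive : ∀ p ∈ Metric.ball 0 r, HasFDerivAt F (liouvilleDefect φ p) p

/-- The primitive `F` of `φ^*λ - λ` along the leaf `a * w = c`, corrected by the terms coming from
the multivalued primitives `g log (φ p).1` and `c log a` of `φ^*λ` and `λ` on that leaf, so that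
it becomes locally constant when `(φ p).1 * (φ p).2 = g` on the leaf. -/
def leafAction (φ : ℂ × ℂ → ℂ × ℂ) (F : ℂ × ℂ → ℝ) (g c σ : ℂ) : ℝ :=
  F (leafPoint c σ) - (g * Complex.log ((φ (leafPoint c σ)).1 * Complex.exp (-σ))).re -
    ((g - c) * σ).re

theorem hasDerivAt_leafPoint {σ : ℝ → ℂ} {v : ℂ} {t : ℝ} (c : ℂ) (hσ : HasDerivAt σ v t) :
    HasDerivAt (fun s ↦ leafPoint c (σ s)) (hamiltonianField v (leafPoint c (σ t))) t := by
  refine (hσ.cexp.prodMk (hσ.neg.cexp.const_mul c)).congr_deriv ?_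
  ext1 <;> simp only [hamiltonianField, leafPoint, mul_neg, Pi.neg_apply] <;> ring

theorem leafAction_log {a : ℂ} (ha : a ≠ 0) (φ : ℂ × ℂ → ℂ × ℂ) (F : ℂ × ℂ → ℝ) (g w : ℂ) :
    leafAction φ F g (a * w) (Complex.log a) =
      F (a, w) - (g * Complex.log ((φ (a, w)).1 / a)).re - ((g - a * w) * Complex.log a).re := by
  rw [leafAction, leafPoint_log ha, Complex.exp_neg, Complex.exp_log ha, div_eq_mul_inv]

theorem leafAction_add_two_pi_mul_I (φ : ℂ × ℂ → ℂ × ℂ) (F : ℂ × ℂ → ℝ) (g c σ : ℂ) :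
    leafAction φ F g c (σ + 2 * Real.pi * Complex.I) =
      leafAction φ F g c σ + 2 * Real.pi * (g - c).im := by
  have hexp : Complex.exp (-(σ + 2 * Real.pi * Complex.I)) = Complex.exp (-σ) := by
    rw [Complex.exp_neg, Complex.exp_neg, Complex.exp_periodic σ]
  have hre : ((g - c) * (2 * Real.pi * Complex.I)).re = -(2 * Real.pi * (g - c).im) := by
    simp [mul_comm]
  rw [leafAction, leafAction, leafPoint_add_two_pi_mul_I, hexp, mul_add, Complex.add_re, hre]
  ring

/-- The part of `((G c).re - c.re) * log ‖c‖` which stays smooth at `c = 0`, read off from the leaf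
action at the points `(δ, c / δ)` and `(c / δ, δ)`. -/
def regularPart (φ : ℂ × ℂ → ℂ × ℂ) (G : ℂ → ℂ) (F : ℂ × ℂ → ℝ) (δ : ℝ) (c : ℂ) : ℝ :=
  F (c / δ, δ) - F (δ, c / δ) + (G c * Complex.log ((φ (δ, c / δ)).1 / δ)).re +
    (G c * Complex.log ((φ (c / δ, δ)).2 / δ)).re + 2 * ((G c).re - c.re) * Real.log δ

namespace NearIdentityData

variable {φ : ℂ × ℂ → ℂ × ℂ} {G : ℂ → ℂ} {F : ℂ × ℂ → ℝ} {r : ℝ} {p p' : ℂ × ℂ} {c : ℂ}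

theorem contDiffAt (h : NearIdentityData φ G F r) (hp : p ∈ Metric.ball 0 r) :
    ContDiffAt ℝ ∞ φ p :=
  h.contDiffOn.contDiffAt (Metric.isOpen_ball.mem_nhds hp)

theorem contDiffAt_primitive (h : NearIdentityData φ G F r) (hp : p ∈ Metric.ball 0 r) :
    ContDiffAt ℝ ∞ F p :=
  h.contDiffOn_primitive.contDiffAt (Metric.isOpen_ball.mem_nhds hp)

theorem norm_fst_div_sub_one_le (h : NearIdentityData φ G F r) (hp : p ∈ Metric.ball 0 r)
    (hne : p.1 ≠ 0) (hle : ‖p.2‖ ≤ ‖p.1‖) : ‖(φ p).1 / p.1 - 1‖ ≤ 1 / 10 := by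
  have hclose := h.close p hp
  rw [Prod.norm_def p, max_eq_left hle] at hclose
  exact norm_div_sub_one_le hne ((norm_fst_le (φ p - p)).trans hclose)

theorem norm_snd_div_sub_one_le (h : NearIdentityData φ G F r) (hp : p ∈ Metric.ball 0 r)
    (hne : p.2 ≠ 0) (hle : ‖p.1‖ ≤ ‖p.2‖) : ‖(φ p).2 / p.2 - 1‖ ≤ 1 / 10 := by
  have hclose := h.close p hp
  rw [Prod.norm_def p, max_eq_right hle] at hclose
  exact norm_div_sub_one_le hne ((norm_snd_le (φ p - p)).trans hclose)

theorem div_mul_div_eq (h : NearIdentityData φ G F r) (hp : p ∈ Metric.ball 0 r) :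
    (φ p).1 / p.1 * ((φ p).2 / p.2) = G (p.1 * p.2) / (p.1 * p.2) := by
  rw [div_mul_div_comm, h.factor p hp]

theorem norm_leaf_div_sub_one_le (h : NearIdentityData φ G F r) (hc : c ≠ 0)
    (hcr : ‖c‖ < r ^ 2) : ‖G c / c - 1‖ ≤ 21 / 100 := by
  obtain ⟨p, hp, rfl, hnorm⟩ := exists_mul_eq_norm_eq h.pos hcr
  rw [← h.div_mul_div_eq hp]
  exact norm_mul_sub_one_le
    (h.norm_fst_div_sub_one_le hp (left_ne_zero_of_mul hc) hnorm.ge)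
    (h.norm_snd_div_sub_one_le hp (right_ne_zero_of_mul hc) hnorm.le)

theorem norm_mul_lt_sq (hp : p ∈ Metric.ball 0 r) : ‖p.1 * p.2‖ < r ^ 2 := by
  obtain ⟨hfst, hsnd⟩ := max_lt_iff.1 (mem_ball_zero_iff.1 hp)
  rw [norm_mul, sq]
  exact mul_lt_mul'' hfst hsnd (norm_nonneg _) (norm_nonneg _)

theorem re_fst_div_pos (h : NearIdentityData φ G F r) (hp : p ∈ Metric.ball 0 r)
    (hne : p.1 * p.2 ≠ 0) : 0 < ((φ p).1 / p.1).re := by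
  refine re_pos_of_norm_sub_one_lt_one ?_
  rcases le_total ‖p.2‖ ‖p.1‖ with hle | hle
  · exact (h.norm_fst_div_sub_one_le hp (left_ne_zero_of_mul hne) hle).trans_lt (by norm_num)
  · have hsnd := h.norm_snd_div_sub_one_le hp (right_ne_zero_of_mul hne) hle
    have hleaf := h.norm_leaf_div_sub_one_le hne (norm_mul_lt_sq hp)
    rw [← h.div_mul_div_eq hp] at hleaf
    exact (norm_sub_one_le_of_mul hleaf hsnd).trans_lt (by norm_num)

theorem hasDerivAt_leafAction (h : NearIdentityData φ G F r) {σ : ℝ → ℂ} {v : ℂ} {t : ℝ}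
    (hc : c ≠ 0) (hσ : HasDerivAt σ v t) (hmem : leafPoint c (σ t) ∈ Metric.ball 0 r) :
    HasDerivAt (fun s ↦ leafAction φ F (G c) c (σ s)) 0 t := by
  set p := leafPoint c (σ t) with hp
  set D := fderiv ℝ φ p (hamiltonianField v p)
  have hleaf : p.1 * p.2 = c := leafPoint_fst_mul_snd c (σ t)
  have hpos : 0 < ((φ p).1 * Complex.exp (-σ t)).re := by
    have := h.re_fst_div_pos hmem (hleaf ▸ hc)
    rwa [div_eq_mul_inv, hp, leafPoint, ← Complex.exp_neg] at this
  have hfst : (φ p).1 ≠ 0 := fun h0 ↦ by simp [h0] at hpos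
  have hpath := hasDerivAt_leafPoint c hσ
  have hφ : HasDerivAt (fun s ↦ φ (leafPoint c (σ s))) D t :=
    ((h.contDiffAt hmem).differentiableAt (by simp)).hasFDerivAt.comp_hasDerivAt t hpath
  have hF : HasDerivAt (fun s ↦ F (leafPoint c (σ s)))
      (liouvilleDefect φ p (hamiltonianField v p)) t :=
    (h.hasFDerivAt_primitive p hmem).comp_hasDerivAt t hpath
  have hφ₁ : HasDerivAt (fun s ↦ (φ (leafPoint c (σ s))).1) D.1 t :=
    (ContinuousLinearMap.fst ℝ ℂ ℂ).hasFDerivAt.comp_hasDerivAt t hφ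
  have hexp : HasDerivAt (fun s ↦ Complex.exp (-σ s)) (Complex.exp (-σ t) * -v) t :=
    hσ.neg.cexp
  have hlog := Complex.reCLM.hasFDerivAt.comp_hasDerivAt t
    (((hφ₁.fun_mul hexp).clog_real (.inl hpos)).const_mul (G c))
  have hlin := Complex.reCLM.hasFDerivAt.comp_hasDerivAt t (hσ.const_mul (G c - c))
  refine ((hF.sub hlog).sub hlin).congr_deriv ?_
  have hquot : G c * ((D.1 * Complex.exp (-σ t) + (φ p).1 * (Complex.exp (-σ t) * -v)) /
      ((φ p).1 * Complex.exp (-σ t))) = (φ p).2 * D.1 - G c * v := by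
    rw [← hleaf, ← h.factor p hmem]
    field_simp [Complex.exp_ne_zero (-σ t)]
    ring
  calc liouvilleDefect φ p (hamiltonianField v p) - Complex.reCLM (G c * _) -
        Complex.reCLM ((G c - c) * v)
      = ((φ p).2 * D.1 - p.2 * (v * p.1) - ((φ p).2 * D.1 - G c * v) - (G c - c) * v).re := by
        rw [hquot]; rfl
    _ = 0 := by
        rw [← hleaf]; ring_nf; rfl

theorem leafAction_eq (h : NearIdentityData φ G F r) (hc : c ≠ 0) {σ₀ σ₁ : ℂ}
    (h₀ : leafPoint c σ₀ ∈ Metric.ball 0 r) (h₁ : leafPoint c σ₁ ∈ Metric.ball 0 r) :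
    leafAction φ F (G c) c σ₀ = leafAction φ F (G c) c σ₁ := by
  have hderiv : ∀ t ∈ Icc (0 : ℝ) 1,
      HasDerivAt (fun t ↦ leafAction φ F (G c) c (AffineMap.lineMap σ₀ σ₁ t)) 0 t := fun t ht ↦
    h.hasDerivAt_leafAction hc AffineMap.hasDerivAt_lineMap
      ((convex_leafPoint_preimage_ball c r).lineMap_mem h₀ h₁ ht)
  have hconst := constant_of_has_deriv_right_zero
    (fun t ht ↦ (hderiv t ht).continuousAt.continuousWithinAt)
    (fun t ht ↦ (hderiv t (Ico_subset_Icc_self ht)).hasDerivWithinAt) 1 (by simp)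
  simpa using hconst.symm

theorem leaf_zero (h : NearIdentityData φ G F r) : G 0 = 0 := by
  have h0 := Metric.mem_ball_self (x := (0 : ℂ × ℂ)) h.pos
  have hφ0 : φ 0 = 0 := by simpa using h.close 0 h0
  simpa [hφ0] using (h.factor 0 h0).symm

-- The leaf action is single valued although `log a` changes by `2πi` around the leaf.
theorem im_leaf_eq (h : NearIdentityData φ G F r) (hcr : ‖c‖ < r ^ 2) : (G c).im = c.im := by
  rcases eq_or_ne c 0 with rfl | hc
  · rw [h.leaf_zero]
  obtain ⟨⟨a, w⟩, hp, rfl, -⟩ := exists_mul_eq_norm_eq h.pos hcr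
  have hmem : leafPoint (a * w) (Complex.log a) ∈ Metric.ball 0 r := by
    rwa [leafPoint_log (left_ne_zero_of_mul hc)]
  have hmonodromy := h.leafAction_eq hc hmem
    (leafPoint_add_two_pi_mul_I (a * w) (Complex.log a) ▸ hmem)
  rw [leafAction_add_two_pi_mul_I, left_eq_add, mul_eq_zero] at hmonodromy
  simpa [sub_eq_zero, Real.pi_ne_zero] using hmonodromy

theorem leafAction_log_fst (h : NearIdentityData φ G F r) (hp : p ∈ Metric.ball 0 r)
    (hne : p.1 ≠ 0) (hleaf : p.1 * p.2 = c) :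
    leafAction φ F (G c) c (Complex.log p.1) =
      F p - (G c * Complex.log ((φ p).1 / p.1)).re - ((G c).re - c.re) * Real.log ‖p.1‖ := by
  have him : (G c).im = c.im := h.im_leaf_eq (hleaf ▸ norm_mul_lt_sq hp)
  rw [← hleaf, leafAction_log hne, hleaf, Complex.mul_re (G c - c), Complex.sub_im, him, sub_self,
    zero_mul, sub_zero, Complex.sub_re, Complex.log_re]

theorem primitive_sub_eq (h : NearIdentityData φ G F r) (hp : p ∈ Metric.ball 0 r)
    (hp' : p' ∈ Metric.ball 0 r) (hc : c ≠ 0) (hleaf : p.1 * p.2 = c)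
    (hleaf' : p'.1 * p'.2 = c) :
    F p - (G c * Complex.log ((φ p).1 / p.1)).re - ((G c).re - c.re) * Real.log ‖p.1‖ =
      F p' - (G c * Complex.log ((φ p').1 / p'.1)).re -
        ((G c).re - c.re) * Real.log ‖p'.1‖ := by
  have hne : p.1 ≠ 0 := left_ne_zero_of_mul (hleaf ▸ hc)
  have hne' : p'.1 ≠ 0 := left_ne_zero_of_mul (hleaf' ▸ hc)
  have hpoint : leafPoint c (Complex.log p.1) = p := hleaf ▸ leafPoint_log hne p.2
  have hpoint' : leafPoint c (Complex.log p'.1) = p' := hleaf' ▸ leafPoint_log hne' p'.2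
  rw [← h.leafAction_log_fst hp hne hleaf, ← h.leafAction_log_fst hp' hne' hleaf']
  exact h.leafAction_eq hc (hpoint.symm ▸ hp) (hpoint'.symm ▸ hp')

-- Comparing the leaf action at the two ends `(δ, c / δ)` and `(c / δ, δ)` of the leaf.
theorem mul_log_norm_eq (h : NearIdentityData φ G F r) {δ : ℝ} (hδ : 0 < δ) (hδr : δ < r)
    (hc : c ≠ 0) (hcδ : ‖c‖ < δ ^ 2) :
    ((G c).re - c.re) * Real.log ‖c‖ =
      regularPart φ G F δ c + -(G c * Complex.log (G c / c)).re := by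
  have hδ0 : (δ : ℂ) ≠ 0 := by exact_mod_cast hδ.ne'
  have hnorm : ‖(δ : ℂ)‖ = δ := by simp [hδ.le]
  have hlt : ‖c / δ‖ < δ := by rwa [norm_div, hnorm, div_lt_iff₀ hδ, ← sq]
  have hp : ((δ : ℂ), c / δ) ∈ Metric.ball 0 r := by
    rw [mem_ball_zero_iff, Prod.norm_def]
    exact max_lt (hnorm.trans_lt hδr) (hlt.trans hδr)
  have hp' : (c / δ, (δ : ℂ)) ∈ Metric.ball 0 r := by
    rw [mem_ball_zero_iff, Prod.norm_def]
    exact max_lt (hlt.trans hδr) (hnorm.trans_lt hδr)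
  have hleaf' : c / δ * δ = c := div_mul_cancel₀ c hδ0
  have haction := h.primitive_sub_eq hp hp' hc (mul_div_cancel₀ c hδ0) hleaf'
  have hfst := h.re_fst_div_pos hp' (hleaf'.trans_ne hc)
  have hsnd := re_pos_of_norm_sub_one_lt_one
    ((h.norm_snd_div_sub_one_le hp' hδ0 (hlt.le.trans hnorm.ge)).trans_lt (by norm_num))
  have hlog := log_mul_of_re_pos hfst hsnd
  rw [h.div_mul_div_eq hp', hleaf'] at hlog
  have hlogc : Real.log ‖c / δ‖ = Real.log ‖c‖ - Real.log δ := by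
    rw [norm_div, hnorm, Real.log_div (norm_ne_zero_iff.2 hc) hδ.ne']
  rw [hnorm, hlogc] at haction
  rw [regularPart, hlog, mul_add, Complex.add_re]
  linear_combination haction

theorem contDiffAt_regularPart (h : NearIdentityData φ G F r) (hG : ContDiffAt ℝ ∞ G 0) {δ : ℝ}
    (hδ : 0 < δ) (hδr : δ < r) : ContDiffAt ℝ ∞ (regularPart φ G F δ) 0 := by
  have hδ0 : (δ : ℂ) ≠ 0 := by exact_mod_cast hδ.ne'
  have hp : ((δ : ℂ), (0 : ℂ) / δ) ∈ Metric.ball 0 r := by simpa [h.pos, abs_of_pos hδ]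
  have hp' : ((0 : ℂ) / δ, (δ : ℂ)) ∈ Metric.ball 0 r := by simpa [h.pos, abs_of_pos hδ]
  have hpath : ContDiffAt ℝ ∞ (fun c : ℂ ↦ ((δ : ℂ), c / (δ : ℂ))) 0 := by fun_prop
  have hpath' : ContDiffAt ℝ ∞ (fun c : ℂ ↦ (c / (δ : ℂ), (δ : ℂ))) 0 := by fun_prop
  have hre : ∀ {f : ℂ → ℂ}, ContDiffAt ℝ ∞ f 0 → ContDiffAt ℝ ∞ (fun c ↦ (f c).re) 0 :=
    fun hf ↦ Complex.reCLM.contDiff.contDiffAt.comp 0 hf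
  have hlog : ∀ {f : ℂ → ℂ}, ContDiffAt ℝ ∞ f 0 → ‖f 0 - 1‖ ≤ 1 / 10 →
      ContDiffAt ℝ ∞ (fun c ↦ Complex.log (f c)) 0 := fun hf hclose ↦
    ((Complex.contDiffAt_log (.inl (re_pos_of_norm_sub_one_lt_one
      (hclose.trans_lt (by norm_num))))).restrict_scalars ℝ).comp 0 hf
  have hF := (h.contDiffAt_primitive hp').comp (0 : ℂ) hpath' |>.sub
    ((h.contDiffAt_primitive hp).comp (0 : ℂ) hpath)
  have hlog₁ := hlog (((h.contDiffAt hp).comp (0 : ℂ) hpath).fst.div_const (δ : ℂ))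
    (h.norm_fst_div_sub_one_le hp hδ0 (by simp))
  have hlog₂ := hlog (((h.contDiffAt hp').comp (0 : ℂ) hpath').snd.div_const (δ : ℂ))
    (h.norm_snd_div_sub_one_le hp' hδ0 (by simp))
  exact ((hF.add (hre (hG.mul hlog₁))).add (hre (hG.mul hlog₂))).add
    ((contDiffAt_const.mul ((hre hG).sub (hre contDiffAt_id))).mul contDiffAt_const)

theorem isBigO_log_remainder (h : NearIdentityData φ G F r) :
    (fun c ↦ -(G c * Complex.log (G c / c)).re) =O[𝓝 0] fun c ↦ (G c).re - c.re := by
  refine .of_bound (9 / 4) ?_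
  filter_upwards [Metric.ball_mem_nhds 0 (sq_pos_of_pos h.pos)] with c hc
  rw [mem_ball_zero_iff] at hc
  have hreal : G c - c = (((G c).re - c.re : ℝ) : ℂ) :=
    Complex.ext (by simp) (by simp [h.im_leaf_eq hc])
  have hclose : ‖G c - c‖ ≤ 1 / 2 * ‖c‖ := by
    rcases eq_or_ne c 0 with rfl | hc0
    · simp [h.leaf_zero]
    · have := h.norm_leaf_div_sub_one_le hc0 hc
      rw [div_sub_one hc0, norm_div, div_le_iff₀ (norm_pos_iff.2 hc0)] at this
      linarith [norm_nonneg c]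
  calc ‖-(G c * Complex.log (G c / c)).re‖ ≤ ‖G c * Complex.log (G c / c)‖ := by
        rw [norm_neg]
        exact Complex.abs_re_le_norm _
    _ ≤ 9 / 4 * ‖G c - c‖ := norm_mul_log_div_le hclose
    _ = 9 / 4 * ‖(G c).re - c.re‖ := by rw [hreal, Complex.norm_real]

theorem isBigO_re_leaf_sub (h : NearIdentityData φ G F r) (hG : ContDiffAt ℝ ∞ G 0) (n : ℕ) :
    (fun c ↦ (G c).re - c.re) =O[𝓝 0] fun c ↦ ‖c‖ ^ n := by
  obtain ⟨δ, hδ, hδr⟩ := exists_between h.pos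
  have hsmooth : ContDiffAt ℝ ∞ (fun c ↦ (G c).re - c.re) 0 :=
    (Complex.reCLM.contDiff.contDiffAt.comp 0 hG).sub Complex.reCLM.contDiff.contDiffAt
  refine isBigO_norm_pow_of_mul_log_norm_eq hsmooth (by simp [h.leaf_zero])
    (h.contDiffAt_regularPart hG hδ hδr) h.isBigO_log_remainder ?_ n
  filter_upwards [self_mem_nhdsWithin,
    nhdsWithin_le_nhds (Metric.ball_mem_nhds 0 (sq_pos_of_pos hδ))] with c hc hcδ
  exact h.mul_log_norm_eq hδ hδr hc (mem_ball_zero_iff.1 hcδ)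

end NearIdentityData

end NearIdentity

section ComplexNormalForm

theorem exists_continuousLinearEquiv_coe_eq {A : ℂ × ℂ →L[ℝ] ℂ × ℂ}
    (hA : ∀ u v, symplecticForm (A u) (A v) = symplecticForm u v) :
    ∃ B : (ℂ × ℂ) ≃L[ℝ] (ℂ × ℂ), (B : ℂ × ℂ →L[ℝ] ℂ × ℂ) = A :=
  ⟨(LinearEquiv.ofBijective (A : ℂ × ℂ →ₗ[ℝ] ℂ × ℂ)
    (bijective_of_symplecticForm_map hA)).toContinuousLinearEquiv, rfl⟩

theorem eventually_of_eventually_mul {P : ℂ → Prop}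
    (h : ∀ᶠ p in 𝓝 (0 : ℂ × ℂ), P (p.1 * p.2)) : ∀ᶠ c in 𝓝 0, P c := by
  obtain ⟨r, hr, hball⟩ := Metric.eventually_nhds_iff_ball.1 h
  filter_upwards [Metric.ball_mem_nhds 0 (sq_pos_of_pos hr)] with c hc
  obtain ⟨p, hp, rfl, -⟩ := exists_mul_eq_norm_eq hr (mem_ball_zero_iff.1 hc)
  exact hball p hp

theorem exists_contDiffOn_injOn_of_hasFDerivAt {E F : Type*} [NormedAddCommGroup E]
    [NormedSpace ℝ E] [CompleteSpace E] [NormedAddCommGroup F] [NormedSpace ℝ F]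
    {f : E → F} {L : E ≃L[ℝ] F} {x : E} (hf : ∀ᶠ y in 𝓝 x, ContDiffAt ℝ ∞ f y)
    (hL : HasFDerivAt f (L : E →L[ℝ] F) x) :
    ∃ W ∈ 𝓝 x, ContDiffOn ℝ ∞ f W ∧ InjOn f W := by
  have hstrict : HasStrictFDerivAt f (L : E →L[ℝ] F) x :=
    hf.self_of_nhds.hasStrictFDerivAt' hL (by simp)
  let h := hstrict.toOpenPartialHomeomorph f
  obtain ⟨V, hV, hfV⟩ := hf.exists_mem
  exact ⟨h.source ∩ V,
    inter_mem (h.open_source.mem_nhds hstrict.mem_toOpenPartialHomeomorph_source) hV,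
    fun y hy ↦ (hfV y hy.2).contDiffWithinAt, h.injOn.mono inter_subset_left⟩

variable {φ : ℂ × ℂ → ℂ × ℂ} {G : ℂ → ℂ} {U : Set (ℂ × ℂ)}

theorem IsSymplecticOn.continuousLinearEquiv_comp {B : (ℂ × ℂ) ≃L[ℝ] (ℂ × ℂ)}
    (hφ : IsSymplecticOn φ U)
    (hB : ∀ u v, symplecticForm (B u) (B v) = symplecticForm u v) :
    IsSymplecticOn (B ∘ φ) U := fun p hp u v ↦ by
  rw [B.comp_fderiv]
  exact (hB _ _).trans (hφ p hp u v)

-- Compare the quadratic terms of `(φ p).1 * (φ p).2` and `G (p.1 * p.2)` along a ray.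
theorem map_mul_of_hasFDerivAt {A : ℂ × ℂ →L[ℝ] ℂ × ℂ} {L : ℂ →L[ℝ] ℂ}
    (hφ : HasFDerivAt φ A 0) (hφ0 : φ 0 = 0) (hG : HasFDerivAt G L 0) (hG0 : G 0 = 0)
    (hφG : ∀ᶠ p in 𝓝 (0 : ℂ × ℂ), (φ p).1 * (φ p).2 = G (p.1 * p.2)) (p : ℂ × ℂ) :
    (A p).1 * (A p).2 = L (p.1 * p.2) := by
  have hA := hφ.lim_real p
  have hL := (hG.lim_real (p.1 * p.2)).comp (tendsto_pow_atTop two_ne_zero)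
  simp only [zero_add, hφ0, hG0, sub_zero] at hA hL
  have hray : Tendsto (fun t : ℝ ↦ t⁻¹ • p) atTop (𝓝 0) := by
    simpa using (tendsto_inv_atTop_zero (𝕜 := ℝ)).smul_const p
  refine tendsto_nhds_unique (hA.fst_nhds.mul hA.snd_nhds) (hL.congr' ?_)
  filter_upwards [hray.eventually hφG] with t ht
  have hscale : (t ^ 2)⁻¹ • (p.1 * p.2) = (t⁻¹ • p).1 * (t⁻¹ • p).2 := by
    rw [Prod.smul_fst, Prod.smul_snd, smul_mul_smul_comm, ← sq, inv_pow]
  rw [Function.comp_apply, hscale, ← ht, Prod.smul_fst, Prod.smul_snd, smul_mul_smul_comm, ← sq]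

theorem exists_nearIdentityData (hU : U ∈ 𝓝 0) (hφ0 : φ 0 = 0) (hφ : ContDiffOn ℝ ∞ φ U)
    (hsymp : IsSymplecticOn φ U) (hid : HasFDerivAt φ (.id ℝ (ℂ × ℂ)) 0)
    (hφG : ∀ᶠ p in 𝓝 (0 : ℂ × ℂ), (φ p).1 * (φ p).2 = G (p.1 * p.2)) :
    ∃ F r, NearIdentityData φ G F r := by
  have hclose : ∀ᶠ p in 𝓝 0, ‖φ p - p‖ ≤ 1 / 10 * ‖p‖ := by
    simpa [hφ0] using hid.isLittleO.def (c := 1 / 10) (by norm_num)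
  obtain ⟨r, hr, hball⟩ :=
    Metric.eventually_nhds_iff_ball.1 ((eventually_mem_set.2 hU).and (hφG.and hclose))
  have hφr : ContDiffOn ℝ ∞ φ (Metric.ball 0 r) := hφ.mono fun p hp ↦ (hball p hp).1
  obtain ⟨F, hF, hF'⟩ := exists_primitive_liouvilleDefect Metric.isOpen_ball (convex_ball 0 r) hφr
    fun p hp ↦ hsymp p (hball p hp).1
  exact ⟨F, r, hr, hφr, fun p hp ↦ (hball p hp).2.1, fun p hp ↦ (hball p hp).2.2, hF, hF'⟩

theorem exists_nearIdentityData_of_hasFDerivAt {B : (ℂ × ℂ) ≃L[ℝ] (ℂ × ℂ)} {L : ℂ →L[ℝ] ℂ}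
    (hU : U ∈ 𝓝 0) (hφ0 : φ 0 = 0) (hφ : ContDiffOn ℝ ∞ φ U) (hsymp : IsSymplecticOn φ U)
    (hB : HasFDerivAt φ (B : ℂ × ℂ →L[ℝ] ℂ × ℂ) 0) (hL : Function.Involutive L)
    (hBL : ∀ p, (B p).1 * (B p).2 = L (p.1 * p.2))
    (hφG : ∀ᶠ p in 𝓝 (0 : ℂ × ℂ), (φ p).1 * (φ p).2 = G (p.1 * p.2)) :
    ∃ F r, NearIdentityData (B.symm ∘ φ) (L ∘ G) F r := by
  have hBsymp : ∀ u v, symplecticForm (B u) (B v) = symplecticForm u v := by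
    simpa only [hB.fderiv, ContinuousLinearEquiv.coe_coe] using hsymp 0 (mem_of_mem_nhds hU)
  have hBsymm : ∀ p, (B.symm p).1 * (B.symm p).2 = L (p.1 * p.2) := fun p ↦ by
    rw [← hL ((B.symm p).1 * _), ← hBL, B.apply_symm_apply]
  have hBsymmsymp : ∀ u v, symplecticForm (B.symm u) (B.symm v) = symplecticForm u v :=
    fun u v ↦ by rw [← hBsymp, B.apply_symm_apply, B.apply_symm_apply]
  exact exists_nearIdentityData hU (by simp [hφ0]) (B.symm.contDiff.comp_contDiffOn hφ)
    (hsymp.continuousLinearEquiv_comp hBsymmsymp)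
    ((B.symm.hasFDerivAt.comp 0 hB).congr_fderiv B.coe_symm_comp_coe)
    (hφG.mono fun p hp ↦ by rw [Function.comp_apply, hBsymm, hp, Function.comp_apply])

theorem involutive_of_signs {L : ℂ →L[ℝ] ℂ} {ε₁ ε₂ : ℝ} (hε₁ : ε₁ = 1 ∨ ε₁ = -1)
    (hε₂ : ε₂ = 1 ∨ ε₂ = -1) (hL : ∀ c, L c = ⟨ε₁ * c.re, ε₂ * c.im⟩) :
    Function.Involutive L := fun c ↦ by
  simp only [hL, ← mul_assoc, mul_self_eq_one_iff.2 hε₁, mul_self_eq_one_iff.2 hε₂, one_mul]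

theorem exists_signs_isBigO (hU : U ∈ 𝓝 0) (hφ0 : φ 0 = 0) (hφ : ContDiffOn ℝ ∞ φ U)
    (hsymp : IsSymplecticOn φ U) (hG : ContDiffAt ℝ ∞ G 0) (hG0 : G 0 = 0)
    (hφG : ∀ᶠ p in 𝓝 (0 : ℂ × ℂ), (φ p).1 * (φ p).2 = G (p.1 * p.2)) :
    ∃ ε₁ ε₂ : ℝ, (ε₁ = 1 ∨ ε₁ = -1) ∧ (ε₂ = 1 ∨ ε₂ = -1) ∧
      (∀ c, fderiv ℝ G 0 c = ⟨ε₁ * c.re, ε₂ * c.im⟩) ∧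
      (∀ᶠ c in 𝓝 0, (G c).im = ε₂ * c.im) ∧
      ∀ n : ℕ, (fun c ↦ (G c).re - ε₁ * c.re) =O[𝓝 0] fun c ↦ ‖c‖ ^ n := by
  have hA : HasFDerivAt φ (fderiv ℝ φ 0) 0 :=
    ((hφ.contDiffAt hU).differentiableAt (by simp)).hasFDerivAt
  have hAsymp := hsymp 0 (mem_of_mem_nhds hU)
  obtain ⟨B, hB⟩ := exists_continuousLinearEquiv_coe_eq hAsymp
  rw [← hB] at hA hAsymp
  set L := fderiv ℝ G 0
  have hBL : ∀ p, (B p).1 * (B p).2 = L (p.1 * p.2) :=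
    map_mul_of_hasFDerivAt hA hφ0 (hG.differentiableAt (by simp)).hasFDerivAt hG0 hφG
  obtain ⟨ε₁, ε₂, hε₁, hε₂, hL : ∀ c, L c = ⟨ε₁ * c.re, ε₂ * c.im⟩⟩ :=
    exists_signs_of_map_mul (A := (B : ℂ × ℂ →L[ℝ] ℂ × ℂ)) (L := L) hAsymp hBL
  obtain ⟨F, r, h⟩ := exists_nearIdentityData_of_hasFDerivAt hU hφ0 hφ hsymp hA
    (involutive_of_signs hε₁ hε₂ hL) hBL hφG
  refine ⟨ε₁, ε₂, hε₁, hε₂, hL, ?_, fun n ↦ ?_⟩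
  · filter_upwards [Metric.ball_mem_nhds 0 (sq_pos_of_pos h.pos)] with c hc
    have him := h.im_leaf_eq (mem_ball_zero_iff.1 hc)
    rw [Function.comp_apply, hL] at him
    linear_combination ε₂ * him - (G c).im * mul_self_eq_one_iff.2 hε₂
  · refine ((h.isBigO_re_leaf_sub (L.contDiff.contDiffAt.comp 0 hG) n).const_mul_left ε₁).congr_left
      fun c ↦ ?_
    rw [Function.comp_apply, hL]
    linear_combination (G c).re * mul_self_eq_one_iff.2 hε₁

theorem exists_complex_normal_form (hU : U ∈ 𝓝 0) (hφ0 : φ 0 = 0) (hφ : ContDiffOn ℝ ∞ φ U)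
    (hsymp : IsSymplecticOn φ U) (hleaf : LeafwiseConstantOn (fun p ↦ (φ p).1 * (φ p).2) U) :
    ∃ (G : ℂ → ℂ) (ε₁ ε₂ : ℝ), (ε₁ = 1 ∨ ε₁ = -1) ∧ (ε₂ = 1 ∨ ε₂ = -1) ∧ G 0 = 0 ∧
      (∃ W ∈ 𝓝 0, ContDiffOn ℝ ∞ G W ∧ InjOn G W) ∧
      (∀ᶠ p in 𝓝 (0 : ℂ × ℂ), (φ p).1 * (φ p).2 = G (p.1 * p.2)) ∧
      (∀ c, (G c).im = ε₂ * c.im) ∧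
      ∀ n : ℕ, (fun c ↦ (G c).re - ε₁ * c.re) =O[𝓝 0] fun c ↦ ‖c‖ ^ n := by
  obtain ⟨G, hG, hφG⟩ := hleaf.exists_contDiff_factorization hU (hφ.fst.mul hφ.snd)
  have hG0 : G 0 = 0 := by simpa [hφ0] using hφG.self_of_nhds.symm
  obtain ⟨ε₁, ε₂, hε₁, hε₂, hL, him, hre⟩ :=
    exists_signs_isBigO hU hφ0 hφ hsymp hG.self_of_nhds hG0 hφG
  have hinv := involutive_of_signs hε₁ hε₂ hL
  have hderiv : HasFDerivAt G
      (ContinuousLinearEquiv.equivOfInverse _ _ hinv hinv : ℂ →L[ℝ] ℂ) 0 :=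
    (hG.self_of_nhds.differentiableAt (by simp)).hasFDerivAt
  -- `G` itself has the required imaginary part only near the origin.
  let G' : ℂ → ℂ := fun c ↦ ⟨(G c).re, ε₂ * c.im⟩
  have hG' : G' =ᶠ[𝓝 0] G := him.mono fun c hc ↦ Complex.ext rfl hc.symm
  refine ⟨G', ε₁, ε₂, hε₁, hε₂, hG'.self_of_nhds.trans hG0,
    exists_contDiffOn_injOn_of_hasFDerivAt ?_ (hderiv.congr_of_eventuallyEq hG'), ?_,
    fun c ↦ rfl, hre⟩
  · filter_upwards [hG, hG'.eventuallyEq_nhds] with c hc hc'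
    exact hc.congr_of_eventuallyEq hc'
  · filter_upwards [hφG, tendsto_fst_mul_snd.eventually hG'] with p hp hp'
    exact hp.trans hp'.symm

end ComplexNormalForm

section RealCoordinates

/-- The complex coordinates `a = x₁ - i x₂`, `w = ξ₁ + i ξ₂` on `ℝ⁴`, in which `q₁ + i q₂ = a w`. -/
def phaseEquiv : E4 ≃L[ℝ] ℂ × ℂ :=
  LinearEquiv.toContinuousLinearEquiv
    { toFun := fun p ↦ (⟨p 0, -p 2⟩, ⟨p 1, p 3⟩)
      invFun := fun z ↦ ![z.1.re, z.2.re, -z.1.im, z.2.im]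
      map_add' := fun p p' ↦ by ext1 <;> apply Complex.ext <;> simp [add_comm]
      map_smul' := fun t p ↦ by ext1 <;> apply Complex.ext <;> simp
      left_inv := fun p ↦ by ext i; fin_cases i <;> simp
      right_inv := fun z ↦ by ext <;> simp }

/-- The complex coordinate `c₁ + i c₂` on the space `ℝ²` of values of `q`. -/
def valueEquiv : E2 ≃L[ℝ] ℂ :=
  Complex.basisOneI.equivFunL.symm

theorem phaseEquiv_apply (p : E4) : phaseEquiv p = (⟨p 0, -p 2⟩, ⟨p 1, p 3⟩) := rfl

theorem valueEquiv_symm_apply (c : ℂ) : valueEquiv.symm c = ![c.re, c.im] :=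
  Complex.coe_basisOneI_repr c

theorem valueEquiv_apply (c : E2) : valueEquiv c = ⟨c 0, c 1⟩ := by
  rw [← valueEquiv.eq_symm_apply, valueEquiv_symm_apply]
  ext i
  fin_cases i <;> rfl

theorem tendsto_valueEquiv : Tendsto valueEquiv (𝓝 0) (𝓝 0) :=
  valueEquiv.continuous.tendsto' 0 0 (map_zero _)

theorem phaseEquiv_fst_mul_snd (p : E4) :
    (phaseEquiv p).1 * (phaseEquiv p).2 = valueEquiv (qmap p) := by
  rw [valueEquiv_apply]
  apply Complex.ext
  · simp [phaseEquiv_apply, qmap, q1]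
  · simp [phaseEquiv_apply, qmap, q2, sub_eq_add_neg]

theorem symplecticForm_phaseEquiv (u v : E4) :
    symplecticForm (phaseEquiv u) (phaseEquiv v) = omega0 u v := by
  simp only [symplecticForm, phaseEquiv_apply, omega0, Complex.sub_re, Complex.mul_re]
  ring

/-- The map `φ` of `ℝ⁴` read in the complex coordinates. -/
def complexCoordMap (φ : E4 → E4) : ℂ × ℂ → ℂ × ℂ :=
  phaseEquiv ∘ φ ∘ phaseEquiv.symm

variable {φ : E4 → E4} {U : Set E4}

theorem complexCoordMap_phaseEquiv (p : E4) :
    complexCoordMap φ (phaseEquiv p) = phaseEquiv (φ p) := by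
  simp [complexCoordMap]

theorem contDiffOn_complexCoordMap (h : ContDiffOn ℝ ∞ φ U) :
    ContDiffOn ℝ ∞ (complexCoordMap φ) (phaseEquiv.symm ⁻¹' U) :=
  phaseEquiv.contDiff.comp_contDiffOn
    (h.comp phaseEquiv.symm.contDiff.contDiffOn (mapsTo_preimage _ _))

theorem isSymplecticOn_complexCoordMap
    (h : ∀ p ∈ U, ∀ u v, omega0 (fderiv ℝ φ p u) (fderiv ℝ φ p v) = omega0 u v) :
    IsSymplecticOn (complexCoordMap φ) (phaseEquiv.symm ⁻¹' U) := fun z hz u v ↦ by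
  rw [complexCoordMap, phaseEquiv.comp_fderiv, phaseEquiv.symm.comp_right_fderiv]
  refine (symplecticForm_phaseEquiv _ _).trans ((h _ hz _ _).trans ?_)
  rw [← symplecticForm_phaseEquiv]
  simp

theorem leafwiseConstantOn_complexCoordMap
    (h : ∀ S ⊆ U, IsPreconnected S → (∀ x ∈ S, ∀ y ∈ S, qmap x = qmap y) →
      ∀ x ∈ S, ∀ y ∈ S, qmap (φ x) = qmap (φ y)) :
    LeafwiseConstantOn (fun z ↦ (complexCoordMap φ z).1 * (complexCoordMap φ z).2)
      (phaseEquiv.symm ⁻¹' U) := fun S hS hpre hleaf x hx y hy ↦ by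
  have hq : ∀ z ∈ S, ∀ z' ∈ S, qmap (phaseEquiv.symm z) = qmap (phaseEquiv.symm z') :=
    fun z hz z' hz' ↦ valueEquiv.injective <| by
      simpa only [← phaseEquiv_fst_mul_snd, phaseEquiv.apply_symm_apply] using hleaf z hz z' hz'
  have hφ := h (phaseEquiv.symm '' S) (image_subset_iff.2 hS)
    (hpre.image _ phaseEquiv.symm.continuous.continuousOn)
    (forall_mem_image.2 fun z hz ↦ forall_mem_image.2 (hq z hz))
    _ (mem_image_of_mem _ hx) _ (mem_image_of_mem _ hy)
  simp only [complexCoordMap, Function.comp_apply, phaseEquiv_fst_mul_snd, hφ]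

theorem eventually_phaseEquiv_iff {P : ℂ × ℂ → Prop} :
    (∀ᶠ p in 𝓝 0, P (phaseEquiv p)) ↔ ∀ᶠ z in 𝓝 0, P z := by
  rw [← map_zero phaseEquiv, ← phaseEquiv.map_nhds_eq, eventually_map]

theorem eventually_of_eventually_qmap {P : E2 → Prop} (h : ∀ᶠ p in 𝓝 0, P (qmap p)) :
    ∀ᶠ c in 𝓝 0, P c := by
  have hmul : ∀ᶠ c in 𝓝 0, P (valueEquiv.symm c) :=
    eventually_of_eventually_mul <| eventually_phaseEquiv_iff.1 <| by
      simpa only [phaseEquiv_fst_mul_snd, valueEquiv.symm_apply_apply] using h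
  simpa using tendsto_valueEquiv.eventually hmul

theorem exists_contDiffOn_injOn_valueEquiv {G : ℂ → ℂ}
    (h : ∃ W ∈ 𝓝 0, ContDiffOn ℝ ∞ G W ∧ InjOn G W) :
    ∃ W ∈ 𝓝 0, ContDiffOn ℝ ∞ (valueEquiv.symm ∘ G ∘ valueEquiv) W ∧
      InjOn (valueEquiv.symm ∘ G ∘ valueEquiv) W := by
  obtain ⟨W, hW, hG, hinj⟩ := h
  refine ⟨valueEquiv ⁻¹' W, tendsto_valueEquiv hW, valueEquiv.symm.contDiff.comp_contDiffOn
    (hG.comp valueEquiv.contDiff.contDiffOn (mapsTo_preimage _ _)), ?_⟩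
  exact valueEquiv.symm.injective.comp_injOn
    (hinj.comp valueEquiv.injective.injOn (mapsTo_preimage _ _))

theorem flatAt_comp_valueEquiv {f : ℂ → ℝ} (hf : ContDiffAt ℝ ∞ f 0)
    (hO : ∀ n : ℕ, f =O[𝓝 0] fun c ↦ ‖c‖ ^ n) : flatAt (f ∘ valueEquiv) 0 := by
  refine flatAt_of_forall_isBigO
    (.comp 0 (by rwa [map_zero]) valueEquiv.contDiff.contDiffAt) fun n ↦ ?_
  have hnorm := ((valueEquiv : E2 →L[ℝ] ℂ).isBigO_id (𝓝 0)).norm_norm.pow n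
  simpa only [sub_zero] using ((hO n).comp_tendsto tendsto_valueEquiv).trans hnorm

end RealCoordinates

/-- **Uniqueness of the normal form (Vũ Ngọc).**
If `φ` is a local symplectomorphism of `(ℝ⁴,0)` preserving the focus-focus foliation
`{q = const}` near the origin (i.e. `q∘φ` is constant on connected subsets of level sets
of `q`), then there is a unique germ of diffeomorphism `G : (ℝ²,0) → (ℝ²,0)` with
`q ∘ φ = G ∘ q`, and `G = (G₁,G₂)` where `G₂(c₁,c₂) = ε₂c₂` and
`(c₁,c₂) ↦ G₁(c₁,c₂) − ε₁c₁` is flat at the origin, for some signs `ε₁, ε₂ = ±1`. -/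
theorem focus_focus_foliation_preserving_normal_form
    (φ : E4 → E4) (U : Set E4) (hUopen : IsOpen U) (hU0 : (0:E4) ∈ U)
    (hφ0 : φ 0 = 0) (hsm : ContDiffOn ℝ (⊤ : ℕ∞) φ U) (hinj : Set.InjOn φ U)
    (hsymp : ∀ p ∈ U, ∀ u v : E4,
      omega0 (fderiv ℝ φ p u) (fderiv ℝ φ p v) = omega0 u v)
    (hfol : ∀ S : Set E4, S ⊆ U → IsPreconnected S →
      (∀ x ∈ S, ∀ y ∈ S, qmap x = qmap y) →
      ∀ x ∈ S, ∀ y ∈ S, qmap (φ x) = qmap (φ y)) :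
    ∃ (G : E2 → E2) (ε1 ε2 : ℝ),
      (ε1 = 1 ∨ ε1 = -1) ∧ (ε2 = 1 ∨ ε2 = -1) ∧
      G 0 = 0 ∧
      (∃ W ∈ 𝓝 (0:E2), ContDiffOn ℝ (⊤ : ℕ∞) G W ∧ Set.InjOn G W) ∧
      (∀ᶠ p in 𝓝 (0:E4), qmap (φ p) = G (qmap p)) ∧
      (∀ c : E2, G c 1 = ε2 * c 1) ∧
      flatAt (fun c : E2 => G c 0 - ε1 * c 0) 0 ∧
      (∀ G' : E2 → E2, (∀ᶠ p in 𝓝 (0:E4), qmap (φ p) = G' (qmap p)) →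
        ∀ᶠ c in 𝓝 (0:E2), G' c = G c) := by
  have hV : phaseEquiv.symm ⁻¹' U ∈ 𝓝 0 :=
    (hUopen.preimage phaseEquiv.symm.continuous).mem_nhds (by simpa using hU0)
  obtain ⟨G, ε1, ε2, hε1, hε2, hG0, hW, hφG, him, hre⟩ :=
    exists_complex_normal_form (φ := complexCoordMap φ) hV (by simp [complexCoordMap, hφ0])
      (contDiffOn_complexCoordMap hsm) (isSymplecticOn_complexCoordMap hsymp)
      (leafwiseConstantOn_complexCoordMap hfol)
  let H : E2 → E2 := valueEquiv.symm ∘ G ∘ valueEquiv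
  have hH : ∀ c, H c = ![(G (valueEquiv c)).re, ε2 * c 1] := fun c ↦ by
    simp [H, valueEquiv_symm_apply, him, valueEquiv_apply]
  have hφH : ∀ᶠ p in 𝓝 0, qmap (φ p) = H (qmap p) := by
    filter_upwards [eventually_phaseEquiv_iff.2 hφG] with p hp
    simpa [H, complexCoordMap_phaseEquiv, phaseEquiv_fst_mul_snd, valueEquiv.eq_symm_apply] using hp
  refine ⟨H, ε1, ε2, hε1, hε2, by simp [H, hG0], exists_contDiffOn_injOn_valueEquiv hW, hφH,
    fun c ↦ by simp [hH], ?_, fun G' hG' ↦ eventually_of_eventually_qmap ?_⟩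
  · obtain ⟨W, hW, hG, -⟩ := hW
    have hf := (Complex.reCLM.contDiff.contDiffAt.comp 0 (hG.contDiffAt hW)).sub
      (Complex.reCLM.contDiff.contDiffAt.const_smul ε1)
    simpa [hH, Function.comp_def, valueEquiv_apply] using flatAt_comp_valueEquiv hf hre
  · filter_upwards [hG', hφH] with p hp hp'
    exact hp.symm.trans hp'
end
end

section
/- Let φ be a local symplectomorphism of (ℝ⁴,0) (φ(0)=0 and φ*ω₀=ω₀ near 0) such that q∘φ = q near the origin, where q=(q₁,q₂). Then φ = A∘χ, where A is a linear symplectomorphism of (ℝ⁴,ω₀) with q∘A = q, and χ is the time-1 Hamiltonian flow of a smooth function of the form g(q₁,q₂) for some smooth g:(ℝ²,0)→ℝ. -/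
open Filter Topology Set MeasureTheory

noncomputable section

/-- Partial derivative of `f` in the `i`-th coordinate direction. -/
def pd (i : Fin 4) (f : E4 → ℝ) (p : E4) : ℝ := fderiv ℝ f p (Pi.single i 1)

/-- The Hamiltonian vector field `X_H = (∂H/∂ξ₁, −∂H/∂x₁, ∂H/∂ξ₂, −∂H/∂x₂)`
of `H` with respect to `ω₀`, in the coordinates `(x₁, ξ₁, x₂, ξ₂)`. -/
def HamVF (H : E4 → ℝ) (p : E4) : E4 :=
  ![pd 1 H p, -(pd 0 H p), pd 3 H p, -(pd 2 H p)]

/-!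
In the coordinates `z = x₁ - i x₂`, `w = ξ₁ + i ξ₂` the momentum map is `q₁ + i q₂ = z w` and
`ω₀ = Re (dw ∧ dz)`, so the Hamiltonian flows of functions of `q` move the fibres of `z w` along
the action `a • (z, w) = (a z, a⁻¹ w)` of `ℂˣ`. A map preserving `ω₀` and `z w` preserves the
Hamiltonian fields of `Re (l z w)`, hence commutes with this action. Comparing a point with the
point of the section `c ↦ (z₀, c / z₀)` on the same orbit gives `Φ p = α (z w) • p` off `z = 0`,
and everywhere by continuity. Write `α = a exp λ`. Since the section is Lagrangian and `Φ` is
symplectic, the form `Re (λ dc)` is closed, and a primitive of it is the required Hamiltonian; the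
constant `a` gives the linear part.
-/

namespace FocusFocus

lemma exists_contDiffOn_log {E : Type*} [NormedAddCommGroup E] [NormedSpace ℝ E] {α : E → ℂ}
    {s : Set E} (hs : IsOpen s) {n : WithTop ℕ∞} (hα : ContDiffOn ℝ n α s) {c₀ : E} (hc₀ : c₀ ∈ s)
    (h₀ : α c₀ ≠ 0) :
    ∃ (lam : E → ℂ) (r : ℝ), 0 < r ∧ Metric.ball c₀ r ⊆ s ∧
      ContDiffOn ℝ n lam (Metric.ball c₀ r) ∧
      ∀ c ∈ Metric.ball c₀ r, α c = α c₀ * Complex.exp (lam c) := by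
  have hdiv : ContDiffOn ℝ n (fun c ↦ α c / α c₀) s := by
    simpa only [div_eq_mul_inv] using hα.mul contDiffOn_const
  have hslit : ∀ᶠ c in 𝓝 c₀, α c / α c₀ ∈ Complex.slitPlane := by
    refine (hdiv.continuousOn.continuousAt (hs.mem_nhds hc₀)).eventually_mem ?_
    rw [div_self h₀]
    exact Complex.isOpen_slitPlane.mem_nhds Complex.one_mem_slitPlane
  obtain ⟨r, hr, hball⟩ := Metric.eventually_nhds_iff_ball.1 ((hs.eventually_mem hc₀).and hslit)
  refine ⟨fun c ↦ Complex.log (α c / α c₀), r, hr, fun c hc ↦ (hball c hc).1, fun c hc ↦ ?_,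
    fun c hc ↦ ?_⟩
  · exact ((Complex.contDiffAt_log (hball c hc).2).restrict_scalars ℝ).comp_contDiffWithinAt c
      (hdiv.mono (fun c hc ↦ (hball c hc).1) c hc)
  · rw [Complex.exp_log (Complex.slitPlane_ne_zero (hball c hc).2), mul_div_cancel₀ _ h₀]

lemma exists_contDiffOn_succ_primitive {E F : Type*} [NormedAddCommGroup E] [NormedSpace ℝ E]
    [NormedAddCommGroup F] [NormedSpace ℝ F] [CompleteSpace F] {s : Set E} (hs : IsOpen s)
    (hconvex : Convex ℝ s) {n : ℕ∞} (hn : n ≠ 0) {η : E → E →L[ℝ] F} (hη : ContDiffOn ℝ n η s)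
    (hclosed : ∀ c ∈ s, ∀ x y, fderiv ℝ η c x y = fderiv ℝ η c y x) :
    ∃ G : E → F, ContDiffOn ℝ (n + 1) G s ∧ ∀ c ∈ s, HasFDerivAt G (η c) c := by
  obtain ⟨G, hG⟩ := hconvex.exists_forall_hasFDerivAt_of_fderiv_symmetric hs
    (hη.differentiableOn (by exact_mod_cast hn)) hclosed
  refine ⟨G, (contDiffOn_succ_iff_fderiv_of_isOpen hs).2 ⟨?_, by simp, ?_⟩, hG⟩
  · exact fun c hc ↦ (hG c hc).differentiableAt.differentiableWithinAt
  · exact hη.congr fun c hc ↦ (hG c hc).fderiv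

/-- The form `ω₀ = Re (dw ∧ dz)` in the complex coordinates `z = x₁ - i x₂`, `w = ξ₁ + i ξ₂`. -/
def complexOmega (u v : ℂ × ℂ) : ℝ := (u.2 * v.1 - u.1 * v.2).re

/-- The action of `ℂˣ` on `ℂ²` by `a • (z, w) = (a z, a⁻¹ w)`, whose orbits foliate the fibres of
`z w`. It is defined for all `a : ℂ`, with the junk value `0` at `a = 0`. -/
def scale (a : ℂ) : ℂ × ℂ →ₗ[ℝ] ℂ × ℂ :=
  (LinearMap.mulLeft ℝ a).prodMap (LinearMap.mulLeft ℝ a⁻¹)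

/-- The infinitesimal generator `(z, w) ↦ (l z, -l w)` of `t ↦ scale (exp (t l))`; it is the
Hamiltonian vector field of `Re (l z w)`. -/
def generator (l : ℂ) : ℂ × ℂ →L[ℝ] ℂ × ℂ :=
  (ContinuousLinearMap.mul ℝ ℂ l).prodMap (-ContinuousLinearMap.mul ℝ ℂ l)

lemma eq_of_complexOmega_eq {u u' : ℂ × ℂ} (h : ∀ v, complexOmega u v = complexOmega u' v) :
    u = u' := by
  have h₁ := h (1, 0)
  have h₂ := h (Complex.I, 0)
  have h₃ := h (0, 1)
  have h₄ := h (0, Complex.I)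
  simp only [complexOmega, Complex.sub_re, Complex.mul_re, Complex.one_re, Complex.one_im,
    Complex.I_re, Complex.I_im, Complex.zero_re, Complex.zero_im] at h₁ h₂ h₃ h₄
  ext1 <;> apply Complex.ext <;> linarith

lemma surjective_of_complexOmega_eq {L : ℂ × ℂ →ₗ[ℝ] ℂ × ℂ}
    (hL : ∀ u v, complexOmega (L u) (L v) = complexOmega u v) : Function.Surjective L :=
  LinearMap.injective_iff_surjective.1 fun u u' h ↦
    eq_of_complexOmega_eq fun v ↦ by rw [← hL u, h, hL]

lemma scale_apply (a : ℂ) (p : ℂ × ℂ) : scale a p = (a * p.1, a⁻¹ * p.2) := rfl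

lemma scale_one (p : ℂ × ℂ) : scale 1 p = p := by simp [scale_apply]

lemma scale_mul (a b : ℂ) (p : ℂ × ℂ) : scale (a * b) p = scale a (scale b p) := by
  simp only [scale_apply, mul_inv, mul_assoc]

lemma scale_fst_mul_snd {a : ℂ} (ha : a ≠ 0) (p : ℂ × ℂ) :
    (scale a p).1 * (scale a p).2 = p.1 * p.2 := by
  simp only [scale_apply]
  field_simp

lemma complexOmega_scale {a : ℂ} (ha : a ≠ 0) (u v : ℂ × ℂ) :
    complexOmega (scale a u) (scale a v) = complexOmega u v := by
  simp only [complexOmega, scale_apply]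
  field_simp

lemma generator_apply (l : ℂ) (p : ℂ × ℂ) : generator l p = (l * p.1, -(l * p.2)) := rfl

lemma complexOmega_generator (l : ℂ) (p v : ℂ × ℂ) :
    complexOmega (generator l p) v = -(l * (p.1 * v.2 + p.2 * v.1)).re := by
  rw [complexOmega, generator_apply, ← Complex.neg_re]
  ring_nf

lemma hasDerivAt_scale_exp (l : ℂ) (p : ℂ × ℂ) (t : ℝ) :
    HasDerivAt (fun τ : ℝ ↦ scale (Complex.exp (τ * l)) p)
      (generator l (scale (Complex.exp (t * l)) p)) t := by
  have hl : HasDerivAt (fun τ : ℝ ↦ (τ : ℂ) * l) l t := by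
    simpa using Complex.ofRealCLM.hasDerivAt.mul_const l
  have hl' : HasDerivAt (fun τ : ℝ ↦ -((τ : ℂ) * l)) (-l) t := hl.neg
  simp only [scale_apply, ← Complex.exp_neg]
  refine ((hl.cexp.mul_const p.1).prodMk (hl'.cexp.mul_const p.2)).congr_deriv ?_
  simp only [generator_apply, Prod.mk.injEq]
  constructor <;> ring

lemma norm_exp_mul_mul_le {t : ℝ} (ht : t ∈ Icc (0 : ℝ) 1) (l u : ℂ) :
    ‖Complex.exp (t * l) * u‖ ≤ max ‖u‖ ‖Complex.exp l * u‖ := by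
  simp only [norm_mul, Complex.norm_exp, Complex.re_ofReal_mul]
  rcases le_total l.re 0 with hl | hl
  · refine le_max_of_le_left (mul_le_of_le_one_left (norm_nonneg u) ?_)
    exact Real.exp_le_one_iff.2 (mul_nonpos_of_nonneg_of_nonpos ht.1 hl)
  · refine le_max_of_le_right ?_
    gcongr
    exact mul_le_of_le_one_left hl ht.2

lemma norm_scale_exp_le {t : ℝ} (ht : t ∈ Icc (0 : ℝ) 1) (l : ℂ) (p : ℂ × ℂ) :
    ‖scale (Complex.exp (t * l)) p‖ ≤ max ‖p‖ ‖scale (Complex.exp l) p‖ := by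
  simp only [scale_apply, ← Complex.exp_neg, ← mul_neg]
  refine max_le ((norm_exp_mul_mul_le ht l p.1).trans ?_)
    ((norm_exp_mul_mul_le ht (-l) p.2).trans ?_)
  · exact max_le_max (norm_fst_le p) (le_max_left _ _)
  · exact max_le_max (norm_snd_le p) (le_max_right _ _)

/-- `U` is open and the differentiable map `Φ` preserves on it the symplectic form and the momentum
map `z w`. -/
structure IsFocusFocusMapOn (Φ : ℂ × ℂ → ℂ × ℂ) (U : Set (ℂ × ℂ)) : Prop where
  isOpen : IsOpen U
  differentiableOn : DifferentiableOn ℝ Φ U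
  complexOmega_fderiv : ∀ p ∈ U, ∀ u v,
    complexOmega (fderiv ℝ Φ p u) (fderiv ℝ Φ p v) = complexOmega u v
  fst_mul_snd : ∀ p ∈ U, (Φ p).1 * (Φ p).2 = p.1 * p.2

/-- The first coordinate of `Φ` along the section `c ↦ (z, c / z)` of the map `(z, w) ↦ z w`,
divided by `z`: the factor by which `Φ` acts on the fibre over `c`. -/
def sectionFactor (Φ : ℂ × ℂ → ℂ × ℂ) (z c : ℂ) : ℂ := (Φ (z, c / z)).1 / z

lemma section_mem_closedBall {z c : ℂ} (hz : z ≠ 0) (hc : c ∈ Metric.ball 0 (‖z‖ ^ 2)) :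
    (z, c / z) ∈ Metric.closedBall (0 : ℂ × ℂ) ‖z‖ := by
  rw [mem_ball_zero_iff] at hc
  rw [mem_closedBall_zero_iff]
  refine max_le le_rfl ?_
  rw [norm_div, div_le_iff₀ (norm_pos_iff.2 hz), ← sq]
  exact hc.le

lemma fst_mul_snd_mem_ball {p : ℂ × ℂ} {R : ℝ} (hp : p ∈ Metric.ball 0 R) :
    p.1 * p.2 ∈ Metric.ball (0 : ℂ) (R ^ 2) := by
  rw [mem_ball_zero_iff] at hp ⊢
  rw [norm_mul, sq]
  exact mul_lt_mul'' ((norm_fst_le p).trans_lt hp) ((norm_snd_le p).trans_lt hp)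
    (norm_nonneg _) (norm_nonneg _)

lemma scale_section {z : ℂ} (hz : z ≠ 0) {p : ℂ × ℂ} (hp : p.1 ≠ 0) :
    scale (p.1 / z) (z, p.1 * p.2 / z) = p := by
  simp only [scale_apply]
  ext1 <;> simp only [inv_div] <;> field_simp

lemma contDiffOn_sectionFactor {Φ : ℂ × ℂ → ℂ × ℂ} {U : Set (ℂ × ℂ)} {n : WithTop ℕ∞}
    (hΦ : ContDiffOn ℝ n Φ U) {z : ℂ} (hz : z ≠ 0) (hzU : Metric.closedBall 0 ‖z‖ ⊆ U) :
    ContDiffOn ℝ n (sectionFactor Φ z) (Metric.ball 0 (‖z‖ ^ 2)) := by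
  have hsection : ContDiff ℝ n fun c : ℂ ↦ (z, c / z) := by
    simp only [div_eq_mul_inv]
    fun_prop
  have hcomp := hΦ.comp hsection.contDiffOn fun c hc ↦ hzU (section_mem_closedBall hz hc)
  exact hcomp.fst.div_const z

namespace IsFocusFocusMapOn

variable {Φ : ℂ × ℂ → ℂ × ℂ} {U : Set (ℂ × ℂ)} (hΦ : IsFocusFocusMapOn Φ U)
include hΦ

lemma hasFDerivAt {p : ℂ × ℂ} (hp : p ∈ U) : HasFDerivAt Φ (fderiv ℝ Φ p) p :=
  (hΦ.differentiableOn.differentiableAt (hΦ.isOpen.mem_nhds hp)).hasFDerivAt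

lemma fderiv_fst_mul_snd {p : ℂ × ℂ} (hp : p ∈ U) (v : ℂ × ℂ) :
    (Φ p).1 * (fderiv ℝ Φ p v).2 + (Φ p).2 * (fderiv ℝ Φ p v).1 = p.1 * v.2 + p.2 * v.1 := by
  have hid : HasFDerivAt (fun x : ℂ × ℂ ↦ x.1 * x.2) _ p :=
    (hasFDerivAt_fst (𝕜 := ℝ)).mul (hasFDerivAt_snd (𝕜 := ℝ))
  have hcomp := (hΦ.hasFDerivAt hp).fst.mul (hΦ.hasFDerivAt hp).snd
  have heq : (fun x ↦ (Φ x).1 * (Φ x).2) =ᶠ[𝓝 p] fun x ↦ x.1 * x.2 :=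
    eventually_of_mem (hΦ.isOpen.mem_nhds hp) hΦ.fst_mul_snd
  simpa using DFunLike.congr_fun (hcomp.unique (hid.congr_of_eventuallyEq heq)) v

lemma fderiv_generator {p : ℂ × ℂ} (hp : p ∈ U) (l : ℂ) :
    fderiv ℝ Φ p (generator l p) = generator l (Φ p) := by
  refine eq_of_complexOmega_eq fun v ↦ ?_
  obtain ⟨u, rfl⟩ := surjective_of_complexOmega_eq (hΦ.complexOmega_fderiv p hp) v
  simp only [ContinuousLinearMap.coe_coe]
  rw [hΦ.complexOmega_fderiv p hp, complexOmega_generator, complexOmega_generator,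
    hΦ.fderiv_fst_mul_snd hp]

-- Both sides follow the flow of `generator l` from `Φ p`.
lemma map_scale_exp {l : ℂ} {p : ℂ × ℂ}
    (hU : ∀ t ∈ Icc (0 : ℝ) 1, scale (Complex.exp (t * l)) p ∈ U) :
    Φ (scale (Complex.exp l) p) = scale (Complex.exp l) (Φ p) := by
  have hleft : ∀ t ∈ Icc (0 : ℝ) 1,
      HasDerivAt (fun τ : ℝ ↦ Φ (scale (Complex.exp (τ * l)) p))
        (generator l (Φ (scale (Complex.exp (t * l)) p))) t := fun t ht ↦ by
    rw [← hΦ.fderiv_generator (hU t ht)]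
    exact (hΦ.hasFDerivAt (hU t ht)).comp_hasDerivAt t (hasDerivAt_scale_exp l p t)
  have hright := hasDerivAt_scale_exp l (Φ p)
  have heq := ODE_solution_unique (v := fun _ ↦ generator l) (fun _ ↦ (generator l).lipschitz)
    (fun t ht ↦ (hleft t ht).continuousAt.continuousWithinAt)
    (fun t ht ↦ (hleft t (Ico_subset_Icc_self ht)).hasDerivWithinAt)
    (fun t _ ↦ (hright t).continuousAt.continuousWithinAt)
    (fun t _ ↦ (hright t).hasDerivWithinAt) (by simp [scale_one])
  simpa using heq (right_mem_Icc.2 zero_le_one)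

lemma map_scale {R : ℝ} (hR : Metric.closedBall 0 R ⊆ U) {a : ℂ} (ha : a ≠ 0) {p : ℂ × ℂ}
    (hp : p ∈ Metric.closedBall 0 R) (hap : scale a p ∈ Metric.closedBall 0 R) :
    Φ (scale a p) = scale a (Φ p) := by
  rw [← Complex.exp_log ha] at hap ⊢
  refine hΦ.map_scale_exp fun t ht ↦ hR ?_
  rw [mem_closedBall_zero_iff] at hp hap ⊢
  exact (norm_scale_exp_le ht _ p).trans (max_le hp hap)

section

variable {z : ℂ} (hz : z ≠ 0) (hzU : Metric.closedBall 0 ‖z‖ ⊆ U)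
include hz hzU

lemma map_eq_of_fst_ne_zero {p : ℂ × ℂ} (hp : p ∈ Metric.ball 0 ‖z‖) (hp₁ : p.1 ≠ 0) :
    ((Φ p).1, sectionFactor Φ z (p.1 * p.2) * (Φ p).2) =
      (sectionFactor Φ z (p.1 * p.2) * p.1, p.2) := by
  set s : ℂ × ℂ := (z, p.1 * p.2 / z) with hs
  have hsmem : s ∈ Metric.closedBall 0 ‖z‖ := section_mem_closedBall hz (fst_mul_snd_mem_ball hp)
  have hscale : scale (p.1 / z) s = p := scale_section hz hp₁
  have hmap : Φ p = scale (p.1 / z) (Φ s) := by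
    have := hΦ.map_scale hzU (div_ne_zero hp₁ hz) hsmem
      (hscale.symm ▸ Metric.ball_subset_closedBall hp)
    rwa [hscale] at this
  have hmul : (Φ s).1 * (Φ s).2 = p.1 * p.2 := by
    rw [hΦ.fst_mul_snd s (hzU hsmem), hs, mul_div_cancel₀ _ hz]
  rw [hmap, scale_apply, sectionFactor, ← hs]
  ext1
  · ring
  · simp only
    field_simp
    linear_combination hmul

lemma map_eq {p : ℂ × ℂ} (hp : p ∈ Metric.ball 0 ‖z‖) :
    ((Φ p).1, sectionFactor Φ z (p.1 * p.2) * (Φ p).2) =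
      (sectionFactor Φ z (p.1 * p.2) * p.1, p.2) := by
  have hcΦ : ContinuousOn Φ (Metric.ball 0 ‖z‖) :=
    hΦ.differentiableOn.continuousOn.mono (Metric.ball_subset_closedBall.trans hzU)
  have hcfactor : ContinuousOn (fun p : ℂ × ℂ ↦ sectionFactor Φ z (p.1 * p.2))
      (Metric.ball 0 ‖z‖) :=
    (contDiffOn_sectionFactor (contDiffOn_zero.2 hΦ.differentiableOn.continuousOn) hz
      hzU).continuousOn.comp (by fun_prop) fun p ↦ fst_mul_snd_mem_ball
  have hdense : Dense {p : ℂ × ℂ | p.1 ≠ 0} := (dense_compl_singleton 0).preimage isOpenMap_fst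
  have heq : EqOn (fun p ↦ ((Φ p).1, sectionFactor Φ z (p.1 * p.2) * (Φ p).2))
      (fun p ↦ (sectionFactor Φ z (p.1 * p.2) * p.1, p.2)) (Metric.ball 0 ‖z‖) :=
    EqOn.of_subset_closure (fun p hp ↦ hΦ.map_eq_of_fst_ne_zero hz hzU hp.1 hp.2)
      (by fun_prop) (by fun_prop) inter_subset_left
      (hdense.open_subset_closure_inter Metric.isOpen_ball)
  exact heq hp

lemma sectionFactor_zero_ne_zero : sectionFactor Φ z 0 ≠ 0 := by
  have hp : ((0, z / 2) : ℂ × ℂ) ∈ Metric.ball 0 ‖z‖ := by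
    simpa [Prod.norm_def] using hz
  intro h
  have hzero : 0 = z / 2 := by simpa [h] using congrArg Prod.snd (hΦ.map_eq hz hzU hp)
  exact div_ne_zero hz two_ne_zero hzero.symm

lemma hasFDerivAt_sectionFactor {c : ℂ} (hc : c ∈ Metric.ball 0 (‖z‖ ^ 2)) :
    ∃ α' : ℂ →L[ℝ] ℂ, HasFDerivAt (sectionFactor Φ z) α' c ∧
      ∀ x, α' x * z = (fderiv ℝ Φ (z, c / z) (0, x / z)).1 := by
  have hsection : HasFDerivAt (fun c : ℂ ↦ (z, c / z))
      ((0 : ℂ →L[ℝ] ℂ).prod ((ContinuousLinearMap.mul ℝ ℂ).flip z⁻¹)) c :=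
    (hasFDerivAt_const z c).prodMk (((ContinuousLinearMap.mul ℝ ℂ).flip z⁻¹).hasFDerivAt)
  have hcomp := ((hΦ.hasFDerivAt (hzU (section_mem_closedBall hz hc))).comp c hsection).fst
  refine ⟨_, hcomp.mul_const z⁻¹, fun x ↦ ?_⟩
  simp only [div_eq_mul_inv, ContinuousLinearMap.flip_mul, smul_apply,
    ContinuousLinearMap.comp_apply, ContinuousLinearMap.prod_apply, zero_apply,
    ContinuousLinearMap.mul_apply', ContinuousLinearMap.coe_fst', smul_eq_mul]
  field_simp

-- The section is Lagrangian, so with `(X, Y)` denoting `Φ` along it, `Re (dY ∧ dX) = 0`; moreover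
-- `dX = X dλ` and `X dY + Y dX = dc`.
lemma re_fderiv_log_symm {c : ℂ} (hc : c ∈ Metric.ball 0 (‖z‖ ^ 2)) {a : ℂ} {lam : ℂ → ℂ}
    (hlam : DifferentiableAt ℝ lam c)
    (hexp : sectionFactor Φ z =ᶠ[𝓝 c] fun c ↦ a * Complex.exp (lam c)) (x y : ℂ) :
    (fderiv ℝ lam c x * y).re = (fderiv ℝ lam c y * x).re := by
  set s : ℂ × ℂ := (z, c / z) with hs
  set D : ℂ → ℂ × ℂ := fun x ↦ fderiv ℝ Φ s (0, x / z) with hD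
  have hsU : s ∈ U := hzU (section_mem_closedBall hz hc)
  have hlagrangian : complexOmega (D x) (D y) = 0 := by
    rw [hD, hΦ.complexOmega_fderiv s hsU]
    simp [complexOmega]
  have hmomentum : ∀ x, (Φ s).1 * (D x).2 + (Φ s).2 * (D x).1 = x := fun x ↦ by
    rw [hΦ.fderiv_fst_mul_snd hsU]
    simp [hs, mul_div_cancel₀ x hz]
  have hlog : ∀ x, (D x).1 = (Φ s).1 * fderiv ℝ lam c x := by
    obtain ⟨α', hα', hα'D⟩ := hΦ.hasFDerivAt_sectionFactor hz hzU hc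
    have hα'_eq := hα'.unique ((hlam.hasFDerivAt.cexp.const_mul a).congr_of_eventuallyEq hexp)
    intro x
    rw [← hα'D, hα'_eq, ← div_mul_cancel₀ (Φ s).1 hz]
    change _ = sectionFactor Φ z c * z * _
    rw [hexp.eq_of_nhds]
    simp only [smul_apply, smul_eq_mul]
    ring
  rw [← sub_eq_zero, ← Complex.sub_re, ← neg_eq_zero, ← hlagrangian, complexOmega, ← Complex.neg_re]
  congr 1
  linear_combination (norm := skip) fderiv ℝ lam c x * hmomentum y - fderiv ℝ lam c y * hmomentum x
  rw [hlog, hlog]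
  ring

end

end IsFocusFocusMapOn

/-- The real-linear forms `h ↦ Re (l h)` on `ℂ`, depending linearly on `l`. -/
def reMul : ℂ →L[ℝ] ℂ →L[ℝ] ℝ :=
  (ContinuousLinearMap.compL ℝ ℂ ℂ ℝ Complex.reCLM).comp (ContinuousLinearMap.mul ℝ ℂ)

lemma reMul_apply (l h : ℂ) : reMul l h = (l * h).re := rfl

lemma exists_contDiffOn_primitive_reMul {s : Set ℂ} (hs : IsOpen s) (hconvex : Convex ℝ s) {n : ℕ∞}
    (hn : n ≠ 0) {lam : ℂ → ℂ} (hlam : ContDiffOn ℝ n lam s)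
    (hclosed : ∀ c ∈ s, ∀ x y, (fderiv ℝ lam c x * y).re = (fderiv ℝ lam c y * x).re) :
    ∃ G : ℂ → ℝ, ContDiffOn ℝ (n + 1) G s ∧ ∀ c ∈ s, HasFDerivAt G (reMul (lam c)) c := by
  refine exists_contDiffOn_succ_primitive hs hconvex hn (reMul.contDiff.comp_contDiffOn hlam)
    fun c hc x y ↦ ?_
  have hlam' : DifferentiableAt ℝ lam c :=
    (hlam.contDiffAt (hs.mem_nhds hc)).differentiableAt (by exact_mod_cast hn)
  have hcomp : HasFDerivAt (fun c ↦ reMul (lam c)) _ c :=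
    reMul.hasFDerivAt.comp c hlam'.hasFDerivAt
  rw [hcomp.fderiv]
  exact hclosed c hc x y

theorem IsFocusFocusMapOn.exists_eventually_eq_scale {Φ : ℂ × ℂ → ℂ × ℂ} {U : Set (ℂ × ℂ)}
    (hΦ : IsFocusFocusMapOn Φ U) (hU₀ : 0 ∈ U) {n : ℕ∞} (hn : n ≠ 0) (hsm : ContDiffOn ℝ n Φ U) :
    ∃ (a : ℂ) (lam : ℂ → ℂ) (G : ℂ → ℝ) (r : ℝ), a ≠ 0 ∧ 0 < r ∧
      ContDiffOn ℝ (n + 1) G (Metric.ball 0 r) ∧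
      (∀ c ∈ Metric.ball 0 r, HasFDerivAt G (reMul (lam c)) c) ∧
      ∀ᶠ p in 𝓝 0, Φ p = scale a (scale (Complex.exp (lam (p.1 * p.2))) p) := by
  obtain ⟨d, hd, hdU⟩ := Metric.nhds_basis_closedBall.mem_iff.1 (hΦ.isOpen.mem_nhds hU₀)
  obtain ⟨z, hz, hzU⟩ : ∃ z : ℂ, z ≠ 0 ∧ Metric.closedBall 0 ‖z‖ ⊆ U :=
    ⟨d, by exact_mod_cast hd.ne', by simpa [abs_of_pos hd] using hdU⟩
  have hz' : 0 < ‖z‖ := norm_pos_iff.2 hz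
  have h₀ := hΦ.sectionFactor_zero_ne_zero hz hzU
  obtain ⟨lam, r, hr, hsub, hlam, hexp⟩ := exists_contDiffOn_log Metric.isOpen_ball
    (contDiffOn_sectionFactor hsm hz hzU) (Metric.mem_ball_self (pow_pos hz' 2)) h₀
  have hnhds : ∀ c ∈ Metric.ball (0 : ℂ) r, Metric.ball 0 r ∈ 𝓝 c := fun c ↦
    Metric.isOpen_ball.mem_nhds
  obtain ⟨G, hGsm, hG⟩ := exists_contDiffOn_primitive_reMul Metric.isOpen_ball (convex_ball 0 r) hn
    hlam fun c hc ↦ hΦ.re_fderiv_log_symm hz hzU (hsub hc)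
      ((hlam.contDiffAt (hnhds c hc)).differentiableAt (by exact_mod_cast hn))
      (eventually_of_mem (hnhds c hc) hexp)
  refine ⟨sectionFactor Φ z 0, lam, G, r, h₀, hr, hGsm, hG, ?_⟩
  have hmul : Tendsto (fun p : ℂ × ℂ ↦ p.1 * p.2) (𝓝 0) (𝓝 0) :=
    Continuous.tendsto' (by fun_prop) 0 0 (by simp)
  filter_upwards [Metric.ball_mem_nhds 0 hz', hmul (Metric.ball_mem_nhds 0 hr)] with p hp hpr
  have hmap := Prod.ext_iff.1 (hΦ.map_eq hz hzU hp)
  have hne : sectionFactor Φ z (p.1 * p.2) ≠ 0 := by simp [hexp _ hpr, h₀]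
  rw [← scale_mul, ← hexp _ hpr]
  exact Prod.ext hmap.1 ((eq_inv_mul_iff_mul_eq₀ hne).2 hmap.2)

/-- The coordinates `z = x₁ - i x₂`, `w = ξ₁ + i ξ₂` on `ℝ⁴`. -/
def coords : (ℂ × ℂ) ≃L[ℝ] E4 :=
  LinearEquiv.toContinuousLinearEquiv
    { toFun := fun p ↦ ![p.1.re, p.2.re, -p.1.im, p.2.im]
      invFun := fun p ↦ (⟨p 0, -p 2⟩, ⟨p 1, p 3⟩)
      map_add' := fun p p' ↦ by ext i; fin_cases i <;> simp [add_comm]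
      map_smul' := fun c p ↦ by ext i; fin_cases i <;> simp
      left_inv := fun p ↦ by simp
      right_inv := fun p ↦ by ext i; fin_cases i <;> simp }

/-- The coordinate `c = q₁ + i q₂` on the base `ℝ²`. -/
def baseCoord : E2 ≃L[ℝ] ℂ := Complex.basisOneI.equivFunL.symm

lemma coords_apply (p : ℂ × ℂ) : coords p = ![p.1.re, p.2.re, -p.1.im, p.2.im] := rfl

lemma coords_symm_apply (p : E4) : coords.symm p = (⟨p 0, -p 2⟩, ⟨p 1, p 3⟩) := rfl

lemma omega0_coords (u v : ℂ × ℂ) : omega0 (coords u) (coords v) = complexOmega u v := by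
  simp only [omega0, complexOmega, coords_apply, Matrix.cons_val, Complex.sub_re, Complex.mul_re]
  ring

lemma baseCoord_qmap (p : E4) :
    baseCoord (qmap p) = (coords.symm p).1 * (coords.symm p).2 := by
  have hbase (y : E2) : baseCoord y = y 0 + y 1 * Complex.I := by
    change Complex.basisOneI.equivFun.symm y = _
    simp [Module.Basis.equivFun_symm_apply, Complex.coe_basisOneI]
  rw [hbase, coords_symm_apply]
  apply Complex.ext
  · simp [qmap, q1, q2]
  · simp [qmap, q1, q2, sub_eq_add_neg, mul_comm]

lemma tendsto_baseCoord_qmap : Tendsto (fun p ↦ baseCoord (qmap p)) (𝓝 0) (𝓝 0) := by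
  simp only [baseCoord_qmap]
  exact Continuous.tendsto' (by fun_prop) 0 0 (by simp)

lemma hamVF_comp_baseCoord_qmap {G : ℂ → ℝ} {l : ℂ} {p : ℂ × ℂ}
    (hG : HasFDerivAt G (reMul l) (p.1 * p.2)) :
    HamVF (fun x ↦ G (baseCoord (qmap x))) (coords p) = coords (generator l p) := by
  have hfun : (fun x : E4 ↦ G (baseCoord (qmap x))) =
      G ∘ fun x ↦ (coords.symm x).1 * (coords.symm x).2 := by
    ext x
    exact congrArg G (baseCoord_qmap x)
  have hsymm : HasFDerivAt (fun x ↦ coords.symm x) (coords.symm : E4 →L[ℝ] ℂ × ℂ) (coords p) :=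
    coords.symm.hasFDerivAt
  have hmul : HasFDerivAt (fun x ↦ (coords.symm x).1 * (coords.symm x).2) _ (coords p) :=
    hsymm.fst.mul hsymm.snd
  have hderiv := HasFDerivAt.comp (coords p) (by simpa using hG) hmul
  have hpd (i : Fin 4) : pd i (fun x ↦ G (baseCoord (qmap x))) (coords p) =
      (l * (p.1 * (coords.symm (Pi.single i 1)).2 + p.2 * (coords.symm (Pi.single i 1)).1)).re := by
    rw [pd, hfun, hderiv.fderiv]
    simp [reMul_apply, mul_add]
  simp only [HamVF, hpd]
  simp only [coords_apply, coords_symm_apply, generator_apply]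
  ext i
  fin_cases i <;> simp [add_comm, sub_eq_add_neg]

lemma isFocusFocusMapOn_conj_coords {φ : E4 → E4} {U : Set E4} (hU : IsOpen U)
    (hφ : DifferentiableOn ℝ φ U)
    (hsymp : ∀ p ∈ U, ∀ u v, omega0 (fderiv ℝ φ p u) (fderiv ℝ φ p v) = omega0 u v)
    (hq : ∀ p ∈ U, qmap (φ p) = qmap p) :
    IsFocusFocusMapOn (coords.symm ∘ φ ∘ coords) (coords ⁻¹' U) where
  isOpen := hU.preimage coords.continuous
  differentiableOn := coords.symm.differentiable.comp_differentiableOn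
    (hφ.comp coords.differentiableOn (mapsTo_preimage _ _))
  complexOmega_fderiv p hp u v := by
    rw [coords.symm.comp_fderiv, coords.comp_right_fderiv, ← omega0_coords]
    simp [hsymp _ hp, omega0_coords]
  fst_mul_snd p hp := by
    simpa only [Function.comp_apply, baseCoord_qmap, coords.symm_apply_apply]
      using congrArg baseCoord (hq _ hp)

/-- The action `scale` of `ℂˣ` in the coordinates of `ℝ⁴`. -/
def realScale (a : ℂ) : E4 →ₗ[ℝ] E4 := coords.toLinearMap ∘ₗ scale a ∘ₗ coords.symm.toLinearMap

lemma realScale_apply (a : ℂ) (p : E4) : realScale a p = coords (scale a (coords.symm p)) := rfl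

lemma omega0_realScale {a : ℂ} (ha : a ≠ 0) (u v : E4) :
    omega0 (realScale a u) (realScale a v) = omega0 u v := by
  simp only [realScale_apply]
  rw [omega0_coords, complexOmega_scale ha, ← omega0_coords, coords.apply_symm_apply,
    coords.apply_symm_apply]

lemma qmap_realScale {a : ℂ} (ha : a ≠ 0) (p : E4) : qmap (realScale a p) = qmap p := by
  apply baseCoord.injective
  rw [baseCoord_qmap, realScale_apply, coords.symm_apply_apply, scale_fst_mul_snd ha,
    baseCoord_qmap]

/-- The Hamiltonian flow on `ℝ⁴` of `G (q₁ + i q₂)`, where `dG = Re (lam dc)`: each orbit stays in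
a fibre of `q`, on which it is the linear flow of `generator`. -/
def fibreFlow (lam : ℂ → ℂ) (t : ℝ) (p : E4) : E4 :=
  realScale (Complex.exp (t * lam (baseCoord (qmap p)))) p

lemma fibreFlow_zero (lam : ℂ → ℂ) (p : E4) : fibreFlow lam 0 p = p := by
  simp [fibreFlow, realScale_apply, scale_one]

lemma hasDerivAt_fibreFlow {lam : ℂ → ℂ} {G : ℂ → ℝ} {p : E4}
    (hG : HasFDerivAt G (reMul (lam (baseCoord (qmap p)))) (baseCoord (qmap p))) (t : ℝ) :
    HasDerivAt (fun τ : ℝ ↦ fibreFlow lam τ p)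
      (HamVF (fun x ↦ G (baseCoord (qmap x))) (fibreFlow lam t p)) t := by
  rw [fibreFlow, realScale_apply, hamVF_comp_baseCoord_qmap (l := lam (baseCoord (qmap p)))]
  · exact coords.hasFDerivAt.comp_hasDerivAt t (hasDerivAt_scale_exp _ _ t)
  · rwa [scale_fst_mul_snd (Complex.exp_ne_zero _), ← baseCoord_qmap]

lemma exists_eventually_eq_realScale_fibreFlow {φ : E4 → E4} {U : Set E4} (hU : IsOpen U)
    (hU₀ : 0 ∈ U) {n : ℕ∞} (hn : n ≠ 0) (hφ : ContDiffOn ℝ n φ U)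
    (hsymp : ∀ p ∈ U, ∀ u v, omega0 (fderiv ℝ φ p u) (fderiv ℝ φ p v) = omega0 u v)
    (hq : ∀ p ∈ U, qmap (φ p) = qmap p) :
    ∃ (a : ℂ) (lam : ℂ → ℂ) (G : ℂ → ℝ) (r : ℝ), a ≠ 0 ∧ 0 < r ∧
      ContDiffOn ℝ (n + 1) G (Metric.ball 0 r) ∧
      (∀ c ∈ Metric.ball 0 r, HasFDerivAt G (reMul (lam c)) c) ∧
      ∀ᶠ p in 𝓝 0, φ p = realScale a (fibreFlow lam 1 p) := by
  have hΦ := isFocusFocusMapOn_conj_coords hU (hφ.differentiableOn (by exact_mod_cast hn)) hsymp hq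
  have hΦsm : ContDiffOn ℝ n (coords.symm ∘ φ ∘ coords) (coords ⁻¹' U) :=
    coords.symm.contDiff.comp_contDiffOn
      (hφ.comp coords.contDiff.contDiffOn (mapsTo_preimage _ _))
  obtain ⟨a, lam, G, r, ha, hr, hGsm, hG, hnormal⟩ :=
    hΦ.exists_eventually_eq_scale (by simpa using hU₀) hn hΦsm
  refine ⟨a, lam, G, r, ha, hr, hGsm, hG, ?_⟩
  have hsymm : Tendsto coords.symm (𝓝 0) (𝓝 0) := by simpa using coords.symm.continuous.tendsto 0
  filter_upwards [hsymm.eventually hnormal] with p hp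
  simpa [fibreFlow, realScale_apply, baseCoord_qmap, coords.symm_apply_eq] using hp

end FocusFocus

open FocusFocus in
theorem miranda_zung_decomposition_general {n : ℕ∞} (hn : n ≠ 0)
    (φ : E4 → E4) (U : Set E4) (hUopen : IsOpen U) (hU0 : (0 : E4) ∈ U)
    (hsm : ContDiffOn ℝ n φ U)
    (hsymp : ∀ p ∈ U, ∀ u v : E4,
      omega0 (fderiv ℝ φ p u) (fderiv ℝ φ p v) = omega0 u v)
    (hq : ∀ p ∈ U, qmap (φ p) = qmap p) :
    ∃ (A : E4 →ₗ[ℝ] E4) (g : E2 → ℝ) (ψ : ℝ → E4 → E4) (V : Set E4) (W : Set E2),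
      (∀ u v : E4, omega0 (A u) (A v) = omega0 u v) ∧
      (∀ p : E4, qmap (A p) = qmap p) ∧
      IsOpen W ∧ (0 : E2) ∈ W ∧ ContDiffOn ℝ (n + 1) g W ∧
      IsOpen V ∧ (0 : E4) ∈ V ∧
      (∀ p ∈ V, ψ 0 p = p) ∧
      (∀ p ∈ V, ∀ t : ℝ,
        HasDerivAt (fun τ : ℝ ↦ ψ τ p) (HamVF (fun x : E4 ↦ g (qmap x)) (ψ t p)) t) ∧
      (∀ p ∈ V, φ p = A (ψ 1 p)) := by
  obtain ⟨a, lam, G, r, ha, hr, hGsm, hG, hφ⟩ :=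
    exists_eventually_eq_realScale_fibreFlow hUopen hU0 hn hsm hsymp hq
  have hball : ∀ᶠ p in 𝓝 0, baseCoord (qmap p) ∈ Metric.ball 0 r :=
    tendsto_baseCoord_qmap (Metric.ball_mem_nhds 0 hr)
  obtain ⟨V, hV, hVopen, hV0⟩ := eventually_nhds_iff.1 (hφ.and hball)
  exact ⟨realScale a, G ∘ baseCoord, fibreFlow lam, V, baseCoord ⁻¹' Metric.ball 0 r,
    omega0_realScale ha, qmap_realScale ha,
    Metric.isOpen_ball.preimage baseCoord.continuous, by simpa using hr,
    hGsm.comp baseCoord.contDiff.contDiffOn (mapsTo_preimage _ _), hVopen, hV0,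
    fun p _ ↦ fibreFlow_zero lam p, fun p hp ↦ hasDerivAt_fibreFlow (hG _ (hV p hp).2),
    fun p hp ↦ (hV p hp).1⟩

/-- **(Miranda–Zung).** A local symplectomorphism `φ` of `(ℝ⁴,0)` with `q ∘ φ = q`
near the origin is the composition `A ∘ χ` of a linear symplectomorphism `A`
preserving `q` and the time-1 Hamiltonian flow `χ` of a smooth function of `(q₁,q₂)`. -/
theorem miranda_zung_decomposition
    (φ : E4 → E4) (U : Set E4) (hUopen : IsOpen U) (hU0 : (0:E4) ∈ U)
    (hφ0 : φ 0 = 0) (hsm : ContDiffOn ℝ (⊤ : ℕ∞) φ U) (hinj : Set.InjOn φ U)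
    (hsymp : ∀ p ∈ U, ∀ u v : E4,
      omega0 (fderiv ℝ φ p u) (fderiv ℝ φ p v) = omega0 u v)
    (hq : ∀ p ∈ U, qmap (φ p) = qmap p) :
    ∃ (A : E4 →ₗ[ℝ] E4) (g : E2 → ℝ) (ψ : ℝ → E4 → E4) (V : Set E4) (W : Set E2),
      -- `A` is a linear symplectomorphism preserving `q`
      (∀ u v : E4, omega0 (A u) (A v) = omega0 u v) ∧
      (∀ p : E4, qmap (A p) = qmap p) ∧
      -- `g` is a smooth function of two variables near the origin
      IsOpen W ∧ (0:E2) ∈ W ∧ ContDiffOn ℝ (⊤ : ℕ∞) g W ∧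
      -- `ψ` is the Hamiltonian flow of `g(q₁,q₂)`, and `φ = A ∘ (time-1 flow)`
      IsOpen V ∧ (0:E4) ∈ V ∧
      (∀ p ∈ V, ψ 0 p = p) ∧
      (∀ p ∈ V, ∀ t ∈ Set.Icc (0:ℝ) 1,
        HasDerivAt (fun τ : ℝ => ψ τ p)
          (HamVF (fun x : E4 => g (qmap x)) (ψ t p)) t) ∧
      (∀ p ∈ V, φ p = A (ψ 1 p)) := by
  obtain ⟨A, g, ψ, V, W, hA, hAq, hW, hW0, hg, hV, hV0, hψ0, hψ, hφ⟩ :=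
    miranda_zung_decomposition_general ENat.top_ne_zero φ U hUopen hU0 hsm hsymp hq
  exact ⟨A, g, ψ, V, W, hA, hAq, hW, hW0, hg, hV, hV0, hψ0, fun p hp t _ ↦ hψ p hp t, hφ⟩
end
end
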